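/- arXiv:math/0607598 — 2 statements merged into one kernel-verified Lean document; each statement's English description precedes it below -/
import Mathlib

section
/- Let f be a quasiperiodically forced circle homeomorphism over an irrational ω with lift F whose fibered rotation number is ρ. Assume that ω, ρ and 1 are rationally independent, i.e. there is no (a,b,c) ∈ ℤ³ \ {(0,0,0)} with aω + bρ + c = 0. Then the fibered rotation number is strictly monotone at f: for every ε > 0, if ρ₊ is the fibered rotation number of the perturbed lift F_ε and ρ₋ is the fibered rotation number of F_{−ε}, then ρ₋ < ρ < ρ₊. -/
open Filter Topology MeasureTheory
open scoped ENNReal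

noncomputable section

/-- The circle `T¹ = ℝ/ℤ`. -/
abbrev T1 := AddCircle (1 : ℝ)

/-- Fiberwise iterate of the skew product: `fiberIter ω F n θ x = F^n_θ(x)`. -/
def fiberIter (ω : ℝ) (F : T1 → ℝ → ℝ) : ℕ → T1 → ℝ → ℝ
  | 0, _, x => x
  | n + 1, θ, x => fiberIter ω F n (θ + (ω : T1)) (F θ x)

/-- `F` is (the fiber part of) a lift of a quasiperiodically forced circle homeomorphism
over `ω`: `F(θ,x) = (θ+ω, F_θ(x))`, each `F_θ` a strictly increasing homeomorphism of `ℝ`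
commuting with `x ↦ x+1`. -/
structure IsQpfLift (ω : ℝ) (F : T1 → ℝ → ℝ) : Prop where
  cont : Continuous fun p : T1 × ℝ => F p.1 p.2
  mono : ∀ θ, StrictMono (F θ)
  surj : ∀ θ, Function.Surjective (F θ)
  per  : ∀ θ x, F θ (x + 1) = F θ x + 1

/-- `ρ` is the fibered rotation number of the lift `F`. -/
def HasRotNum (ω : ℝ) (F : T1 → ℝ → ℝ) (ρ : ℝ) : Prop :=
  ∀ θ x, Tendsto (fun n : ℕ => (fiberIter ω F n θ x - x) / n) atTop (𝓝 ρ)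

/-- `ω`, `ρ` and `1` are rationally independent. -/
def RatIndep (ω ρ : ℝ) : Prop :=
  ∀ a b c : ℤ, (a : ℝ) * ω + (b : ℝ) * ρ + (c : ℝ) = 0 → a = 0 ∧ b = 0 ∧ c = 0

namespace Qpf

/-- A two-sided cocycle of fiber maps over the rotation by `α`. -/
structure Coc (α : T1) (φ : ℤ → T1 → ℝ → ℝ) : Prop where
  zero : ∀ θ x, φ 0 θ x = x
  add : ∀ m n θ x, φ (m + n) θ x = φ m (θ + n • α) (φ n θ x)
  cont : ∀ n, Continuous fun p : T1 × ℝ => φ n p.1 p.2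
  mono : ∀ n θ, StrictMono (φ n θ)
  per : ∀ n θ x, φ n θ (x + 1) = φ n θ x + 1

theorem int_per (f : ℝ → ℝ) (h : ∀ x, f (x + 1) = f x + 1) (x : ℝ) (m : ℤ) :
    f (x + m) = f x + m := by
  induction m using Int.induction_on with
  | zero => simp
  | succ i ih =>
    push_cast at ih ⊢
    rw [← add_assoc, h, ih]; ring
  | pred i ih =>
    push_cast at ih ⊢
    have := h (x + (-(i : ℝ) - 1))
    have e : x + (-(i : ℝ) - 1) + 1 = x + -(i : ℝ) := by ring
    rw [e, ih] at this
    linarith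

theorem Coc.perZ {α φ} (h : Coc α φ) (n : ℤ) (θ : T1) (x : ℝ) (m : ℤ) :
    φ n θ (x + m) = φ n θ x + m := int_per _ (h.per n θ) x m

theorem Coc.neg {α φ} (h : Coc α φ) (n : ℤ) (θ : T1) (x : ℝ) :
    φ (-n) (θ + n • α) (φ n θ x) = x := by
  rw [← h.add, neg_add_cancel, h.zero]

theorem Coc.neg' {α φ} (h : Coc α φ) (n : ℤ) (θ : T1) (x : ℝ) :
    φ n θ (φ (-n) (θ + n • α) x) = x := by
  have := h.add n (-n) (θ + n • α) x
  simp only [add_neg_cancel, neg_smul, add_neg_cancel_right, h.zero] at this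
  exact this.symm

theorem Coc.succ {α φ} (h : Coc α φ) (n : ℤ) (θ : T1) (x : ℝ) :
    φ (n + 1) θ x = φ 1 (θ + n • α) (φ n θ x) := by
  rw [add_comm, h.add]

/-- Order relation between orbits, for all times. -/
def Le (χ η : ℤ → T1 → ℝ → ℝ) (θ : T1) (a b : ℝ) : Prop := ∀ n, χ n θ a ≤ η n θ b

theorem Le.shift {α χ η} (h1 : Coc α χ) (h2 : Coc α η) {θ a b} (h : Le χ η θ a b) (k : ℤ) :
    Le χ η (θ + k • α) (χ k θ a) (η k θ b) := by
  intro n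
  rw [← h1.add, ← h2.add]
  exact h _

theorem Le.transl {α χ η} (h1 : Coc α χ) (h2 : Coc α η) {θ a b} (h : Le χ η θ a b) (m : ℤ) :
    Le χ η θ (a + m) (b + m) := by
  intro n
  rw [h1.perZ, h2.perZ]
  linarith [h n]

theorem Le.le {α χ η} (h1 : Coc α χ) (h2 : Coc α η) {θ a b} (h : Le χ η θ a b) : a ≤ b := by
  have := h 0
  rwa [h1.zero, h2.zero] at this

theorem Le.mono {α χ η} (h1 : Coc α χ) (h2 : Coc α η) {θ a b a' b'} (h : Le χ η θ a b)
    (ha : a' ≤ a) (hb : b ≤ b') : Le χ η θ a' b' := fun n =>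
  ((h1.mono n θ).monotone ha).trans ((h n).trans ((h2.mono n θ).monotone hb))

theorem Coc.tendsto {α φ} (h : Coc α φ) {ι : Type*} {l : Filter ι} {t : ι → T1} {a : ι → ℝ} {θ x}
    (ht : Tendsto t l (𝓝 θ)) (ha : Tendsto a l (𝓝 x)) (n : ℤ) :
    Tendsto (fun k => φ n (t k) (a k)) l (𝓝 (φ n θ x)) :=
  ((h.cont n).tendsto (θ, x)).comp (ht.prodMk_nhds ha)

theorem Le.lim {α χ η} (h1 : Coc α χ) (h2 : Coc α η) {ι : Type*} {l : Filter ι} [l.NeBot]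
    {t : ι → T1} {a b : ι → ℝ} {θ x y} (ht : Tendsto t l (𝓝 θ)) (ha : Tendsto a l (𝓝 x))
    (hb : Tendsto b l (𝓝 y)) (h : ∀ n : ℤ, ∀ᶠ k in l, χ n (t k) (a k) ≤ η n (t k) (b k)) :
    Le χ η θ x y := fun n =>
  le_of_tendsto_of_tendsto (h1.tendsto ht ha n) (h2.tendsto ht hb n) (h n)

theorem ulim {ι : Type*} (u : Ultrafilter ι) (f : ι → ℝ) (a b : ℝ)
    (h : ∀ᶠ i in u, f i ∈ Set.Icc a b) : ∃ c, Tendsto f u (𝓝 c) := by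
  obtain ⟨c, -, hc⟩ := (isCompact_Icc (a := a) (b := b)).ultrafilter_le_nhds (u.map f)
    (by rw [le_principal_iff]; exact h)
  exact ⟨c, hc⟩

theorem ulimT {ι : Type*} (u : Ultrafilter ι) (f : ι → T1) : ∃ c, Tendsto f u (𝓝 c) := by
  have : Fact ((0:ℝ) < 1) := ⟨one_pos⟩
  obtain ⟨c, -, hc⟩ := (isCompact_univ (X := T1)).ultrafilter_le_nhds (u.map f)
    (by simp)
  exact ⟨c, hc⟩

/-- The cocycle `ψ` is the perturbation of `φ` by `ε`. -/
structure Pert (α : T1) (φ ψ : ℤ → T1 → ℝ → ℝ) (ε : ℝ) : Prop where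
  hφ : Coc α φ
  hψ : Coc α ψ
  pos : 0 < ε
  step : ∀ θ x, ψ 1 θ x = φ 1 θ x + ε

section
variable {α : T1} {φ ψ : ℤ → T1 → ℝ → ℝ} {ε : ℝ}

theorem Pert.le_succ (H : Pert α φ ψ ε) {n θ x y} (h : φ n θ x ≤ ψ n θ y) :
    φ (n + 1) θ x + ε ≤ ψ (n + 1) θ y := by
  rw [H.hφ.succ, H.hψ.succ, H.step]
  have := (H.hφ.mono 1 (θ + n • α)).monotone h
  linarith

theorem Pert.le_of_le (H : Pert α φ ψ ε) {n m θ x y} (h : φ n θ x ≤ ψ n θ y) (hnm : n ≤ m) :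
    φ m θ x ≤ ψ m θ y := by
  induction m, hnm using Int.leInduction with
  | base => exact h
  | succ m _ ih => linarith [H.le_succ ih, H.pos]

theorem Pert.ge_of_ge (H : Pert α φ ψ ε) {n m θ x y} (h : ψ n θ y ≤ φ n θ x) (hnm : m ≤ n) :
    ψ m θ y ≤ φ m θ x := by
  rcases hnm.eq_or_lt with rfl | hlt
  · exact h
  by_contra hc
  push Not at hc
  have := H.le_succ hc.le
  have := H.le_of_le (n := m + 1) (m := n) (x := x) (y := y) (by linarith [H.pos]) (by omega)
  have e : φ n θ x = ψ n θ y := le_antisymm this h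
  have h3 : φ (n - 1) θ x ≤ ψ (n - 1) θ y := H.le_of_le hc.le (by omega)
  have := H.le_succ h3
  rw [sub_add_cancel] at this
  linarith [H.pos]

theorem Pert.gap (H : Pert α φ ψ ε) {θ x y} (h : Le φ ψ θ x y) : x + ε ≤ y := by
  have := H.le_succ (h (-1))
  simpa [H.hφ.zero, H.hψ.zero] using this

/-- one full step `x ⊑ y ⊑ z`. -/
def C (φ ψ : ℤ → T1 → ℝ → ℝ) (θ : T1) (x z : ℝ) : Prop := ∃ y, Le φ ψ θ x y ∧ Le ψ φ θ y z

/-- minimal full step -/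
def S (φ ψ : ℤ → T1 → ℝ → ℝ) (θ : T1) (x : ℝ) : ℝ := sInf {z | C φ ψ θ x z}

theorem Pert.C_gap (H : Pert α φ ψ ε) {θ x z} (h : C φ ψ θ x z) : x + ε ≤ z := by
  obtain ⟨y, h1, h2⟩ := h
  have := H.gap h1
  have := h2.le H.hψ H.hφ
  linarith

theorem Pert.C_shift (H : Pert α φ ψ ε) {θ x z} (h : C φ ψ θ x z) (k : ℤ) :
    C φ ψ (θ + k • α) (φ k θ x) (φ k θ z) := by
  obtain ⟨y, h1, h2⟩ := h
  exact ⟨_, h1.shift H.hφ H.hψ k, h2.shift H.hψ H.hφ k⟩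

theorem Pert.C_transl (H : Pert α φ ψ ε) {θ x z} (h : C φ ψ θ x z) (k : ℤ) :
    C φ ψ θ (x + k) (z + k) := by
  obtain ⟨y, h1, h2⟩ := h
  exact ⟨_, h1.transl H.hφ H.hψ k, h2.transl H.hψ H.hφ k⟩

theorem Pert.C_mono (H : Pert α φ ψ ε) {θ x z x' z'} (h : C φ ψ θ x z) (hx : x' ≤ x) (hz : z ≤ z') :
    C φ ψ θ x' z' := by
  obtain ⟨y, h1, h2⟩ := h
  exact ⟨_, h1.mono H.hφ H.hψ hx le_rfl, h2.mono H.hψ H.hφ le_rfl hz⟩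

theorem Pert.C_lim (H : Pert α φ ψ ε) {ι : Type*} {u : Ultrafilter ι} {t : ι → T1} {a b : ι → ℝ}
    {θ x z} (ht : Tendsto t u (𝓝 θ)) (ha : Tendsto a u (𝓝 x)) (hb : Tendsto b u (𝓝 z))
    (h : ∀ᶠ k in u, C φ ψ (t k) (a k) (b k)) : C φ ψ θ x z := by
  have h' : ∀ k, ∃ y, C φ ψ (t k) (a k) (b k) →
      Le φ ψ (t k) (a k) y ∧ Le ψ φ (t k) y (b k) := by
    intro k
    by_cases hk : C φ ψ (t k) (a k) (b k)
    · obtain ⟨y, hy⟩ := hk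
      exact ⟨y, fun _ => hy⟩
    · exact ⟨0, fun h => absurd h hk⟩
  choose y hy using h'
  obtain ⟨c, hc⟩ := ulim u y (x - 1) (z + 1) (by
    filter_upwards [h, ha.eventually (lt_mem_nhds (show x - 1 < x by linarith)),
      hb.eventually (gt_mem_nhds (show z < z + 1 by linarith))] with k h1 h2 h3
    have h4 := (hy k h1).1.le H.hφ H.hψ
    have h5 := (hy k h1).2.le H.hψ H.hφ
    exact ⟨by linarith, by linarith⟩)
  exact ⟨c, Le.lim H.hφ H.hψ ht ha hc fun n => by filter_upwards [h] with k hk using (hy k hk).1 n,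
    Le.lim H.hψ H.hφ ht hc hb fun n => by filter_upwards [h] with k hk using (hy k hk).2 n⟩

/-- Perturbation data with bounded displacement. -/
structure PertB (α : T1) (φ ψ : ℤ → T1 → ℝ → ℝ) (ε : ℝ) : Prop extends Pert α φ ψ ε where
  bdd : ∀ θ, ∃ x, C φ ψ θ x (x + 1)

theorem PertB.exC (H : PertB α φ ψ ε) (θ x) : ∃ z, C φ ψ θ x z := by
  obtain ⟨x0, h0⟩ := H.bdd θ
  obtain ⟨m, hm⟩ := exists_int_gt (x - x0)
  exact ⟨_, H.C_mono (H.C_transl h0 m) (by linarith) le_rfl⟩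

theorem PertB.C_S (H : PertB α φ ψ ε) (θ x) : C φ ψ θ x (S φ ψ θ x) := by
  have hne : {z | C φ ψ θ x z}.Nonempty := H.exC θ x
  have hbd : BddBelow {z | C φ ψ θ x z} := ⟨x, fun z hz => by linarith [H.C_gap hz, H.pos]⟩
  have hcl : IsClosed {z | C φ ψ θ x z} := by
    rw [isClosed_iff_ultrafilter]
    intro z u hu hs
    exact H.C_lim (u := u) (t := fun _ => θ) (a := fun _ => x) (b := id) tendsto_const_nhds
      tendsto_const_nhds hu hs
  exact hcl.csInf_mem hne hbd

theorem PertB.S_le (H : PertB α φ ψ ε) {θ x z} : S φ ψ θ x ≤ z ↔ C φ ψ θ x z :=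
  ⟨fun h => H.C_mono (H.C_S θ x) le_rfl h,
   fun h => csInf_le ⟨x, fun z hz => by linarith [H.C_gap hz, H.pos]⟩ h⟩

theorem PertB.S_gap (H : PertB α φ ψ ε) (θ x) : x + ε ≤ S φ ψ θ x := H.C_gap (H.C_S θ x)

theorem PertB.S_mono (H : PertB α φ ψ ε) (θ) : Monotone (S φ ψ θ) := fun x x' h =>
  H.S_le.2 (H.C_mono (H.C_S θ x') h le_rfl)

theorem PertB.S_per (H : PertB α φ ψ ε) (θ x) : S φ ψ θ (x + 1) = S φ ψ θ x + 1 := by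
  apply le_antisymm
  · have := H.C_transl (H.C_S θ x) 1
    rw [H.S_le]; simpa using this
  · have := H.C_transl (H.C_S θ (x + 1)) (-1)
    have : S φ ψ θ x ≤ S φ ψ θ (x + 1) + -1 := by rw [H.S_le]; simpa using this
    linarith

theorem PertB.S_shift (H : PertB α φ ψ ε) (k : ℤ) (θ x) :
    S φ ψ (θ + k • α) (φ k θ x) = φ k θ (S φ ψ θ x) := by
  apply le_antisymm
  · rw [H.S_le]
    exact H.C_shift (H.C_S θ x) k
  · have h := H.C_shift (H.C_S (θ + k • α) (φ k θ x)) (-k)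
    rw [H.hφ.neg, neg_smul, add_neg_cancel_right, ← H.S_le] at h
    have := (H.hφ.mono k θ).monotone h
    rwa [H.hφ.neg'] at this

theorem PertB.it_mono (H : PertB α φ ψ ε) (θ) (j : ℕ) : Monotone ((S φ ψ θ)^[j]) :=
  (H.S_mono θ).iterate j

theorem PertB.it_per (H : PertB α φ ψ ε) (θ) (j : ℕ) (x) :
    (S φ ψ θ)^[j] (x + 1) = (S φ ψ θ)^[j] x + 1 := by
  induction j generalizing x with
  | zero => simp
  | succ j ih => rw [Function.iterate_succ_apply, H.S_per, ih, Function.iterate_succ_apply]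

theorem PertB.it_perZ (H : PertB α φ ψ ε) (θ) (j : ℕ) (x) (m : ℤ) :
    (S φ ψ θ)^[j] (x + m) = (S φ ψ θ)^[j] x + m := int_per _ (H.it_per θ j) x m

theorem PertB.it_shift (H : PertB α φ ψ ε) (k : ℤ) (θ) (j : ℕ) (x) :
    (S φ ψ (θ + k • α))^[j] (φ k θ x) = φ k θ ((S φ ψ θ)^[j] x) := by
  induction j generalizing x with
  | zero => simp
  | succ j ih => rw [Function.iterate_succ_apply, H.S_shift, ih, Function.iterate_succ_apply]

theorem PertB.it_gap (H : PertB α φ ψ ε) (θ) (j : ℕ) (x) : x + j * ε ≤ (S φ ψ θ)^[j] x := by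
  induction j generalizing x with
  | zero => simp
  | succ j ih =>
    rw [Function.iterate_succ_apply]
    have := ih (S φ ψ θ x)
    have := H.S_gap θ x
    push_cast; linarith

theorem PertB.le_it (H : PertB α φ ψ ε) (θ) (j : ℕ) (x) : x ≤ (S φ ψ θ)^[j] x := by
  have := H.it_gap θ j x
  have := H.pos
  have : 0 ≤ (j : ℝ) * ε := by positivity
  linarith

theorem PertB.it_lim (H : PertB α φ ψ ε) {ι : Type*} {u : Ultrafilter ι} {t : ι → T1} {θ} (j : ℕ)
    (ht : Tendsto t u (𝓝 θ)) {a b : ι → ℝ} {x z}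
     (ha : Tendsto a u (𝓝 x)) (hb : Tendsto b u (𝓝 z))
    (h : ∀ᶠ k in u, (S φ ψ (t k))^[j] (a k) ≤ b k) : (S φ ψ θ)^[j] x ≤ z := by
  induction j generalizing b z with
  | zero => exact le_of_tendsto_of_tendsto ha hb h
  | succ j ih =>
    obtain ⟨c, hc⟩ := ulim u (fun k => (S φ ψ (t k))^[j] (a k)) (x - 1) (z + 1) (by
      filter_upwards [h, ha.eventually (lt_mem_nhds (show x - 1 < x by linarith)),
        hb.eventually (gt_mem_nhds (show z < z + 1 by linarith))] with k h1 h2 h3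
      have h4 := H.le_it (t k) j (a k)
      rw [Function.iterate_succ_apply'] at h1
      have h5 := H.S_gap (t k) ((S φ ψ (t k))^[j] (a k))
      have := H.pos
      exact ⟨by linarith, by linarith⟩)
    have h1 := ih hc (Eventually.of_forall fun _ => le_rfl)
    have h2 : S φ ψ θ c ≤ z := by
      rw [H.S_le]
      refine H.C_lim ht hc hb ?_
      filter_upwards [h] with k hk
      rwa [Function.iterate_succ_apply', H.S_le] at hk
    rw [Function.iterate_succ_apply']
    exact (H.S_mono θ h1).trans h2

end
end Qpf

namespace Qpf
section
variable {α : T1} {φ ψ : ℤ → T1 → ℝ → ℝ} {ε : ℝ} {N : ℕ}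

/-- Points whose `S`-chain closes up after `N` steps. -/
def Q (φ ψ : ℤ → T1 → ℝ → ℝ) (N : ℕ) (θ : T1) (x : ℝ) : Prop := (S φ ψ θ)^[N] x ≤ x + 1

/-- `N` is the maximal chain length. -/
structure MaxD (α : T1) (φ ψ : ℤ → T1 → ℝ → ℝ) (ε : ℝ) (N : ℕ) : Prop
    extends PertB α φ ψ ε where
  Npos : 0 < N
  ex : ∃ θ x, Q φ ψ N θ x
  max : ∀ θ x, x + 1 < (S φ ψ θ)^[N + 1] x

theorem PertB.exists_max (H : PertB α φ ψ ε) : ∃ N, MaxD α φ ψ ε N := by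
  classical
  have h1 : ∃ θ x, Q φ ψ 1 θ x := by
    obtain ⟨x, hx⟩ := H.bdd 0
    exact ⟨0, x, by simpa [Q, H.S_le] using hx⟩
  have hb : ∃ N : ℕ, ¬ ∃ θ x, Q φ ψ (N + 1) θ x := by
    obtain ⟨n, hn⟩ := exists_nat_gt (1 / ε)
    refine ⟨n, ?_⟩
    rintro ⟨θ, x, h⟩
    have h2 := H.it_gap θ (n + 1) x
    have h3 := H.pos
    rw [div_lt_iff₀ h3] at hn
    unfold Q at h
    push_cast at h2
    linarith
  have hs := Nat.find_spec hb
  have hm := fun m => Nat.find_min (m := m) hb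
  generalize Nat.find hb = N at hs hm
  have hN : N ≠ 0 := by
    rintro rfl
    exact hs h1
  refine ⟨N, H, Nat.pos_of_ne_zero hN, ?_, ?_⟩
  · have := hm (N - 1) (by omega)
    rw [Nat.sub_add_cancel (by omega)] at this
    exact not_not.1 this
  · intro θ x
    by_contra h
    exact hs ⟨θ, x, not_lt.1 h⟩

theorem MaxD.two_step (H : MaxD α φ ψ ε N) {θ a u b u' s} (e : ℕ → ℤ)
    (h1 : ∀ n : ℤ, ∀ᶠ k in atTop, φ (n + e k) θ a ≤ ψ (n + e k) θ u)
    (h2 : ∀ n : ℤ, ∀ᶠ k in atTop, ψ (n + e k) θ u ≤ φ (n + e k) θ b)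
    (h3 : ∀ n : ℤ, ∀ᶠ k in atTop, φ (n + e k) θ b ≤ ψ (n + e k) θ u')
    (h4 : ∀ n : ℤ, ∀ᶠ k in atTop, ψ (n + e k) θ u' ≤ φ (n + e k) θ s)
    (h5 : (S φ ψ θ)^[N - 1] s ≤ a + 1) : False := by
  have hU : ∀ {p : ℕ → Prop}, (∀ᶠ k in atTop, p k) → ∀ᶠ k in (hyperfilter ℕ : Filter ℕ), p k :=
    fun h => Nat.hyperfilter_le_atTop h
  have hs : s ≤ a + 1 := (H.le_it θ (N - 1) s).trans h5
  have z1 := hU (h1 0)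
  have z2 := hU (h2 0)
  have z3 := hU (h3 0)
  have z4 := hU (h4 0)
  simp only [zero_add] at z1 z2 z3 z4
  have hA : ∀ k, 0 ≤ φ (e k) θ a + (-⌊φ (e k) θ a⌋ : ℤ) ∧ φ (e k) θ a + (-⌊φ (e k) θ a⌋ : ℤ) ≤ 1 := by
    intro k
    have := Int.floor_le (φ (e k) θ a)
    have := Int.lt_floor_add_one (φ (e k) θ a)
    push_cast
    constructor <;> linarith
  have hsA : ∀ k, φ (e k) θ s ≤ φ (e k) θ a + 1 := fun k => by
    rw [← H.hφ.per]; exact (H.hφ.mono _ _).monotone hs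
  generalize hm : (fun k => (-⌊φ (e k) θ a⌋ : ℤ)) = m at hA
  have hA : ∀ k, 0 ≤ φ (e k) θ a + m k ∧ φ (e k) θ a + m k ≤ 1 := by
    subst hm; exact hA
  obtain ⟨θ', hθ⟩ := ulimT (hyperfilter ℕ) (fun k => θ + e k • α)
  obtain ⟨a', ha⟩ := ulim (hyperfilter ℕ) (fun k => φ (e k) θ a + m k) 0 2 (by
    filter_upwards with k
    have := hA k
    exact ⟨by linarith, by linarith⟩)
  obtain ⟨v, hv⟩ := ulim (hyperfilter ℕ) (fun k => ψ (e k) θ u + m k) 0 2 (by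
    filter_upwards [z1, z2, z3, z4] with k z1 z2 z3 z4
    have := hA k; have := hsA k
    exact ⟨by linarith, by linarith⟩)
  obtain ⟨b', hb⟩ := ulim (hyperfilter ℕ) (fun k => φ (e k) θ b + m k) 0 2 (by
    filter_upwards [z1, z2, z3, z4] with k z1 z2 z3 z4
    have := hA k; have := hsA k
    exact ⟨by linarith, by linarith⟩)
  obtain ⟨v', hv'⟩ := ulim (hyperfilter ℕ) (fun k => ψ (e k) θ u' + m k) 0 2 (by
    filter_upwards [z1, z2, z3, z4] with k z1 z2 z3 z4
    have := hA k; have := hsA k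
    exact ⟨by linarith, by linarith⟩)
  obtain ⟨s', hs'⟩ := ulim (hyperfilter ℕ) (fun k => φ (e k) θ s + m k) 0 2 (by
    filter_upwards [z1, z2, z3, z4] with k z1 z2 z3 z4
    have := hA k; have := hsA k
    exact ⟨by linarith, by linarith⟩)
  have c1 : S φ ψ θ' a' ≤ b' := by
    rw [H.S_le]
    refine ⟨v, Le.lim H.hφ H.hψ hθ ha hv fun n => ?_, Le.lim H.hψ H.hφ hθ hv hb fun n => ?_⟩
    · filter_upwards [hU (h1 n)] with k hk
      rw [H.hφ.perZ, H.hψ.perZ, ← H.hφ.add, ← H.hψ.add]; linarith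
    · filter_upwards [hU (h2 n)] with k hk
      rw [H.hφ.perZ, H.hψ.perZ, ← H.hφ.add, ← H.hψ.add]; linarith
  have c2 : S φ ψ θ' b' ≤ s' := by
    rw [H.S_le]
    refine ⟨v', Le.lim H.hφ H.hψ hθ hb hv' fun n => ?_, Le.lim H.hψ H.hφ hθ hv' hs' fun n => ?_⟩
    · filter_upwards [hU (h3 n)] with k hk
      rw [H.hφ.perZ, H.hψ.perZ, ← H.hφ.add, ← H.hψ.add]; linarith
    · filter_upwards [hU (h4 n)] with k hk
      rw [H.hφ.perZ, H.hψ.perZ, ← H.hφ.add, ← H.hψ.add]; linarith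
  have c3 : (S φ ψ θ')^[N - 1] s' ≤ a' + 1 := by
    refine H.it_lim (N - 1) hθ hs' (ha.add_const 1) ?_
    filter_upwards with k
    rw [H.it_perZ, H.it_shift]
    have := (H.hφ.mono (e k) θ).monotone h5
    rw [H.hφ.per] at this
    linarith
  have := H.max θ' a'
  have hN : N + 1 = (N - 1) + 1 + 1 := by have := H.Npos; omega
  rw [hN, Function.iterate_succ_apply, Function.iterate_succ_apply] at this
  have := H.it_mono θ' (N - 1) ((H.S_mono θ' c1).trans c2)
  linarith

theorem MaxD.it_eq (H : MaxD α φ ψ ε N) (θ x) :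
    (S φ ψ θ)^[N] x = (S φ ψ θ)^[N - 1] (S φ ψ θ x) := by
  have hN : N = (N - 1) + 1 := by have := H.Npos; omega
  conv_lhs => rw [hN]
  rw [Function.iterate_succ_apply]

/-- Key claim: two points of `Q` within one `S`-step have the same image under `S`. -/
theorem MaxD.claim (H : MaxD α φ ψ ε N) {θ a a'} (ha : Q φ ψ N θ a) (ha' : Q φ ψ N θ a')
    (h : a ≤ a') (h' : a' < S φ ψ θ a) : S φ ψ θ a' = S φ ψ θ a := by
  by_contra hne
  have hlt : S φ ψ θ a < S φ ψ θ a' := lt_of_le_of_ne (H.S_mono θ h) (Ne.symm hne)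
  obtain ⟨u, hu1, hu2⟩ := H.C_S θ a
  obtain ⟨u', hu1', hu2'⟩ := H.C_S θ a'
  unfold Q at ha ha'
  rw [H.it_eq] at ha ha'
  have hn : ¬ Le φ ψ θ a' u := fun hle => by
    have : S φ ψ θ a' ≤ S φ ψ θ a := H.S_le.2 ⟨u, hle, hu2⟩
    linarith
  unfold Le at hn
  push Not at hn
  obtain ⟨n0, hn0⟩ := hn
  by_cases hc : ∃ n1, ψ n1 θ u' ≤ φ n1 θ (S φ ψ θ a)
  · obtain ⟨n1, hn1⟩ := hc
    refine H.two_step (θ := θ) (a := a) (u := u) (b := a') (u' := u') (s := S φ ψ θ a)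
      (fun k => -(k : ℤ)) (fun n => Eventually.of_forall fun k => hu1 _) (fun n => ?_)
      (fun n => Eventually.of_forall fun k => hu1' _) (fun n => ?_) ha
    · filter_upwards [eventually_ge_atTop (n - n0).toNat] with k hk
      exact H.ge_of_ge hn0.le (by omega)
    · filter_upwards [eventually_ge_atTop (n - n1).toNat] with k hk
      exact H.ge_of_ge hn1 (by omega)
  · push Not at hc
    have hSS : S φ ψ θ (S φ ψ θ a) ≤ S φ ψ θ a' := H.S_le.2 ⟨u', fun n => (hc n).le, hu2'⟩
    have hn : ¬ Le ψ φ θ u a' := fun hle => by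
      have : S φ ψ θ a ≤ a' := H.S_le.2 ⟨u, hu1, hle⟩
      linarith
    unfold Le at hn
    push Not at hn
    obtain ⟨n2, hn2⟩ := hn
    obtain ⟨w, hw1, hw2⟩ := H.C_S θ (S φ ψ θ a)
    refine H.two_step (θ := θ) (a := a') (u := u) (b := S φ ψ θ a) (u' := w)
      (s := S φ ψ θ (S φ ψ θ a))
      (fun k => (k : ℤ)) (fun n => ?_) (fun n => Eventually.of_forall fun k => hu2 _)
      (fun n => Eventually.of_forall fun k => hw1 _) (fun n => Eventually.of_forall fun k => hw2 _)
      ((H.it_mono θ _ hSS).trans ha')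
    filter_upwards [eventually_ge_atTop (n2 - n).toNat] with k hk
    exact H.le_of_le hn2.le (by omega)

theorem MaxD.Q_S (H : MaxD α φ ψ ε N) {θ x} (h : Q φ ψ N θ x) : Q φ ψ N θ (S φ ψ θ x) := by
  unfold Q at *
  rw [← Function.iterate_succ_apply, Function.iterate_succ_apply', ← H.S_per]
  exact H.S_mono θ h

theorem MaxD.Q_it (H : MaxD α φ ψ ε N) {θ x} (h : Q φ ψ N θ x) (j : ℕ) :
    Q φ ψ N θ ((S φ ψ θ)^[j] x) := by
  induction j with
  | zero => exact h
  | succ j ih => rw [Function.iterate_succ_apply']; exact H.Q_S ih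

theorem MaxD.Q_transl (H : MaxD α φ ψ ε N) {θ x} (h : Q φ ψ N θ x) (m : ℤ) :
    Q φ ψ N θ (x + m) := by
  unfold Q at *
  rw [H.it_perZ]; linarith

theorem MaxD.Q_shift (H : MaxD α φ ψ ε N) {θ x} (h : Q φ ψ N θ x) (k : ℤ) :
    Q φ ψ N (θ + k • α) (φ k θ x) := by
  unfold Q at *
  rw [H.it_shift, ← H.hφ.per]
  exact (H.hφ.mono k θ).monotone h

theorem MaxD.Q_lim (H : MaxD α φ ψ ε N) {ι : Type*} {u : Ultrafilter ι} {t : ι → T1} {θ}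
    (ht : Tendsto t u (𝓝 θ)) {a : ι → ℝ} {x} (ha : Tendsto a u (𝓝 x))
    (h : ∀ᶠ k in u, Q φ ψ N (t k) (a k)) : Q φ ψ N θ x :=
  H.it_lim N ht ha (ha.add_const 1) h

theorem MaxD.Q_mid (H : MaxD α φ ψ ε N) {θ x x' z} (h : Q φ ψ N θ x)
    (he : S φ ψ θ x = S φ ψ θ x') (h1 : x ≤ z) (h2 : z ≤ x') : Q φ ψ N θ z := by
  have hz : S φ ψ θ z = S φ ψ θ x :=
    le_antisymm (he ▸ H.S_mono θ h2) (H.S_mono θ h1)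
  unfold Q at *
  rw [H.it_eq] at *
  rw [hz]; linarith

theorem MaxD.S_itN (H : MaxD α φ ψ ε N) {θ c} (h : Q φ ψ N θ c) :
    S φ ψ θ ((S φ ψ θ)^[N] c) = S φ ψ θ (c + 1) := by
  refine (H.claim (H.Q_it h N) (by simpa using H.Q_transl h 1) h ?_).symm
  have := H.max θ c
  rwa [Function.iterate_succ_apply'] at this

theorem dense_closed {P : T1 → Prop} (hα : DenseRange (fun n : ℤ => n • α)) (hne : ∃ θ, P θ)
    (hcl : IsClosed {θ | P θ}) (hinv : ∀ θ, P θ → ∀ k : ℤ, P (θ + k • α)) (θ : T1) : P θ := by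
  obtain ⟨θ0, h0⟩ := hne
  have : IsClosed {t | P (θ0 + t)} := hcl.preimage (continuous_const.add continuous_id)
  have h2 : ∀ t, t ∈ {t | P (θ0 + t)} := by
    intro t
    refine this.closure_subset_iff.2 ?_ (hα t)
    rintro _ ⟨n, rfl⟩
    exact hinv _ h0 n
  simpa using h2 (θ - θ0)

theorem norm01 (x : ℝ) : x + (-⌊x⌋ : ℤ) ∈ Set.Icc (0:ℝ) 1 := by
  have := Int.floor_le x
  have := Int.lt_floor_add_one x
  push_cast
  constructor <;> linarith

theorem MaxD.Q_ex (H : MaxD α φ ψ ε N) (hα : DenseRange (fun n : ℤ => n • α)) (θ : T1) :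
    ∃ x ∈ Set.Icc (0:ℝ) 1, Q φ ψ N θ x := by
  refine dense_closed (P := fun θ => ∃ x ∈ Set.Icc (0:ℝ) 1, Q φ ψ N θ x) hα ?_ ?_ ?_ θ
  · obtain ⟨θ, x, h⟩ := H.ex
    exact ⟨θ, _, norm01 x, H.Q_transl h _⟩
  · rw [isClosed_iff_ultrafilter]
    intro t u hu hs
    have h' : ∀ θ, ∃ x, (∃ x ∈ Set.Icc (0:ℝ) 1, Q φ ψ N θ x) → x ∈ Set.Icc (0:ℝ) 1 ∧ Q φ ψ N θ x := by
      intro θ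
      by_cases hk : ∃ x ∈ Set.Icc (0:ℝ) 1, Q φ ψ N θ x
      · obtain ⟨y, hy⟩ := hk
        exact ⟨y, fun _ => hy⟩
      · exact ⟨0, fun h => absurd h hk⟩
    choose f hf using h'
    have hs' : ∀ᶠ θ in (u : Filter T1), ∃ x ∈ Set.Icc (0:ℝ) 1, Q φ ψ N θ x := hs
    obtain ⟨c, hc⟩ := ulim u f 0 1 (by filter_upwards [hs'] with k hk using (hf k hk).1)
    refine ⟨c, isClosed_Icc.mem_of_tendsto hc
      (by filter_upwards [hs'] with k hk using (hf k hk).1), ?_⟩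
    exact H.Q_lim (t := id) hu hc (by filter_upwards [hs'] with k hk using (hf k hk).2)
  · rintro θ ⟨x, -, hx⟩ k
    exact ⟨_, norm01 (φ k θ x), H.Q_transl (H.Q_shift hx k) _⟩

end
end Qpf

namespace Qpf
section
variable {α : T1} {φ ψ : ℤ → T1 → ℝ → ℝ} {ε : ℝ} {N : ℕ}

/-- A continuous fibered degree-one coordinate collapsing the blocks of `Q`. -/
structure Coord (φ ψ : ℤ → T1 → ℝ → ℝ) (N : ℕ) (h : T1 → ℝ → ℝ) : Prop where
  cont : Continuous fun p : T1 × ℝ => h p.1 p.2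
  per : ∀ θ x, h θ (x + 1) = h θ x + 1
  const : ∀ θ x x', Q φ ψ N θ x → x ≤ x' → S φ ψ θ x = S φ ψ θ x' → h θ x = h θ x'
  bdd : ∀ θ x, |h θ x - x| ≤ 1

theorem MaxD.exists_dist (H : MaxD α φ ψ ε N) :
    ∃ f : T1 → ℝ → ℝ, Continuous (Function.uncurry f) ∧ (∀ θ x, 0 ≤ f θ x) ∧
      (∀ θ x, Q φ ψ N θ x → f θ x = 0) ∧ (∀ θ x, ¬ Q φ ψ N θ x → 0 < f θ x) ∧
      ∀ θ, Function.Periodic (f θ) 1 := by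
  set QS : Set (T1 × ℝ) := {p | Q φ ψ N p.1 p.2} with hQS
  have hcl : IsClosed QS := by
    rw [isClosed_iff_ultrafilter]
    intro p u hu hs
    exact H.Q_lim (u := u) (t := Prod.fst) (a := Prod.snd)
      ((continuous_fst.tendsto p).mono_left hu) ((continuous_snd.tendsto p).mono_left hu) hs
  have hne : QS.Nonempty := by
    obtain ⟨θ, x, h⟩ := H.ex
    exact ⟨(θ, x), h⟩
  set f : T1 → ℝ → ℝ := fun θ x => Metric.infDist (θ, x) QS with hf
  have hfc : Continuous (Function.uncurry f) := Metric.continuous_infDist_pt QS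
  have hf0 : ∀ θ x, 0 ≤ f θ x := fun θ x => Metric.infDist_nonneg
  have hfQ : ∀ θ x, Q φ ψ N θ x → f θ x = 0 := fun θ x h =>
    Metric.infDist_zero_of_mem (s := QS) h
  have hfpos : ∀ θ x, ¬ Q φ ψ N θ x → 0 < f θ x := fun θ x h =>
    (hcl.notMem_iff_infDist_pos hne).1 h
  have hfper : ∀ θ, Function.Periodic (f θ) 1 := by
    intro θ x
    let Φ : T1 × ℝ → T1 × ℝ := fun p => (p.1, p.2 + 1)
    have hΦ : Isometry Φ := by
      refine Isometry.of_dist_eq fun p q => ?_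
      simp [Φ, Prod.dist_eq]
    have him : Set.image Φ QS = QS := by
      ext ⟨t, y⟩
      constructor
      · rintro ⟨⟨t', y'⟩, hy, he⟩
        simp only [Φ, Prod.mk.injEq] at he
        obtain ⟨rfl, rfl⟩ := he
        have := H.Q_transl (show Q φ ψ N t' y' from hy) 1
        simp only [Int.cast_one] at this
        exact this
      · intro hy
        refine ⟨(t, y - 1), ?_, by simp [Φ]⟩
        have := H.Q_transl (show Q φ ψ N t y from hy) (-1)
        simp only [Int.cast_neg, Int.cast_one, ← sub_eq_add_neg] at this
        exact this
    have := Metric.infDist_image hΦ (x := (θ, x)) (t := QS)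
    rw [him] at this
    exact this
  exact ⟨f, hfc, hf0, hfQ, hfpos, hfper⟩

theorem MaxD.exists_coord (H : MaxD α φ ψ ε N) (hα : DenseRange (fun n : ℤ => n • α)) :
    ∃ h, Coord φ ψ N h := by
  obtain ⟨f, hfc, hf0, hfQ, hfpos, hfper⟩ := H.exists_dist
  have hfi : ∀ θ a b, IntervalIntegrable (f θ) volume a b := fun θ a b =>
    (hfc.comp (Continuous.prodMk_right θ)).intervalIntegrable a b
  have hmass : ∀ θ, 0 < ∫ t in (0:ℝ)..1, f θ t := by
    intro θ
    obtain ⟨b, -, hb⟩ := H.Q_ex hα θ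
    have hnq : ¬ Q φ ψ N θ (S φ ψ θ b - ε / 2) := by
      intro hq
      have h1 := H.S_gap θ b
      have h2 := H.S_gap θ (S φ ψ θ b - ε / 2)
      have h3 := H.pos
      have := H.claim hb hq (by linarith) (by linarith)
      linarith
    refine intervalIntegral.integral_pos one_pos
      (hfc.comp (Continuous.prodMk_right θ)).continuousOn (fun x _ => hf0 θ x)
      ⟨_, norm01 (S φ ψ θ b - ε / 2), hfpos _ _ fun hq => hnq ?_⟩
    have := H.Q_transl hq ⌊S φ ψ θ b - ε / 2⌋
    rwa [add_assoc, ← Int.cast_add, neg_add_cancel, Int.cast_zero, add_zero] at this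
  have hadd : ∀ θ x, ∫ t in (0:ℝ)..(x + 1), f θ t = (∫ t in (0:ℝ)..x, f θ t) + ∫ t in (0:ℝ)..1, f θ t := by
    intro θ x
    rw [← intervalIntegral.integral_add_adjacent_intervals (hfi θ 0 x) (hfi θ x (x + 1))]
    congr 1
    have := (hfper θ).intervalIntegral_add_eq x 0
    simpa using this
  have hmono : ∀ θ x y, x ≤ y → (∫ t in (0:ℝ)..x, f θ t) ≤ ∫ t in (0:ℝ)..y, f θ t := by
    intro θ x y hxy
    rw [← intervalIntegral.integral_add_adjacent_intervals (hfi θ 0 x) (hfi θ x y)]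
    have := intervalIntegral.integral_nonneg_of_forall (μ := volume) hxy (hf0 θ)
    linarith
  refine ⟨fun θ x => (∫ t in (0:ℝ)..x, f θ t) / ∫ t in (0:ℝ)..1, f θ t, ?_, ?_, ?_, ?_⟩
  · have hF : Continuous (Function.uncurry fun (p : T1 × ℝ) (t : ℝ) => f p.1 t) :=
      hfc.comp (by fun_prop : Continuous fun q : (T1 × ℝ) × ℝ => (q.1.1, q.2))
    refine Continuous.div ?_ ?_ fun p => (hmass p.1).ne'
    · exact intervalIntegral.continuous_parametric_intervalIntegral_of_continuous hF continuous_snd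
    · exact intervalIntegral.continuous_parametric_intervalIntegral_of_continuous hF
        continuous_const
  · intro θ x
    simp only [hadd]
    rw [add_div, div_self (hmass θ).ne']
  · intro θ x x' hx hle he
    congr 1
    rw [← intervalIntegral.integral_add_adjacent_intervals (hfi θ 0 x) (hfi θ x x')]
    have : ∫ t in x..x', f θ t = 0 := by
      rw [intervalIntegral.integral_congr (g := fun _ => 0), intervalIntegral.integral_zero]
      intro t ht
      rw [Set.uIcc_of_le hle] at ht
      exact hfQ θ t (H.Q_mid hx he ht.1 ht.2)
    rw [this, add_zero]
  · intro θ x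
    set h : ℝ → ℝ := fun x => (∫ t in (0:ℝ)..x, f θ t) / ∫ t in (0:ℝ)..1, f θ t with hh
    have hper : ∀ x, h (x + 1) = h x + 1 := fun x => by
      simp only [hh, hadd]
      rw [add_div, div_self (hmass θ).ne']
    have hm : Monotone h := fun x y hxy => by
      simp only [hh]
      exact div_le_div_of_nonneg_right (hmono θ x y hxy) (hmass θ).le
    have h0 : h 0 = 0 := by simp [hh]
    have h1 : h 1 = 1 := by have := hper 0; simpa [h0] using this
    have hx := norm01 x
    have e := int_per h hper x (-⌊x⌋)
    have l1 := hm hx.1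
    have l2 := hm hx.2
    rw [e, h0] at l1
    rw [e, h1] at l2
    change |h x - x| ≤ 1
    rw [abs_le]
    constructor <;> linarith [hx.1, hx.2]

/-- Sum of the coordinates along an `S`-chain. -/
def Sg (φ ψ : ℤ → T1 → ℝ → ℝ) (N : ℕ) (h : T1 → ℝ → ℝ) (θ : T1) (c : ℝ) : ℝ :=
  ∑ i ∈ Finset.range N, h θ ((S φ ψ θ)^[i] c)

variable {h : T1 → ℝ → ℝ}

theorem MaxD.Sg_eq (_H : MaxD α φ ψ ε N) (K : Coord φ ψ N h) {θ x x'} (hx : Q φ ψ N θ x)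
    (hle : x ≤ x') (he : S φ ψ θ x = S φ ψ θ x') : Sg φ ψ N h θ x = Sg φ ψ N h θ x' := by
  refine Finset.sum_congr rfl fun i _ => ?_
  cases i with
  | zero => exact K.const θ x x' hx hle he
  | succ i => rw [Function.iterate_succ_apply, he, Function.iterate_succ_apply]

theorem MaxD.Sg_S (H : MaxD α φ ψ ε N) (K : Coord φ ψ N h) {θ c} (hc : Q φ ψ N θ c) :
    Sg φ ψ N h θ (S φ ψ θ c) = Sg φ ψ N h θ c + 1 := by
  have h1 := Finset.sum_range_succ' (fun i => h θ ((S φ ψ θ)^[i] c)) N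
  have h2 := Finset.sum_range_succ (fun i => h θ ((S φ ψ θ)^[i] c)) N
  have h3 : h θ ((S φ ψ θ)^[N] c) = h θ c + 1 := by
    rw [← K.per]
    exact K.const θ _ _ (H.Q_it hc N) hc (H.S_itN hc)
  unfold Sg
  simp only [Function.iterate_succ_apply, Function.iterate_zero_apply] at h1
  linarith

theorem MaxD.Sg_it (H : MaxD α φ ψ ε N) (K : Coord φ ψ N h) {θ c} (hc : Q φ ψ N θ c) (k : ℕ) :
    Sg φ ψ N h θ ((S φ ψ θ)^[k] c) = Sg φ ψ N h θ c + k := by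
  induction k with
  | zero => simp
  | succ k ih =>
    rw [Function.iterate_succ_apply', H.Sg_S K (H.Q_it hc k), ih]; push_cast; ring

theorem MaxD.Sg_transl (H : MaxD α φ ψ ε N) (K : Coord φ ψ N h) (θ c) (m : ℤ) :
    Sg φ ψ N h θ (c + m) = Sg φ ψ N h θ c + N * m := by
  unfold Sg
  simp only [H.it_perZ, int_per _ (K.per θ), Finset.sum_add_distrib]
  simp

theorem MaxD.compare (H : MaxD α φ ψ ε N) {θ c c'} (hc : Q φ ψ N θ c) (hc' : Q φ ψ N θ c') :
    ∃ (k : ℕ) (m : ℤ), (S φ ψ θ)^[k] c + m ≤ c' ∧ S φ ψ θ ((S φ ψ θ)^[k] c + m) = S φ ψ θ c' := by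
  classical
  obtain ⟨m, hm⟩ := exists_int_lt (c' - c)
  have hb : ∃ k : ℕ, c' < (S φ ψ θ)^[k + 1] c + m := by
    obtain ⟨n, hn⟩ := exists_nat_gt ((c' - c - m) / ε)
    refine ⟨n, ?_⟩
    have h2 := H.it_gap θ (n + 1) c
    have h3 := H.pos
    rw [div_lt_iff₀ h3] at hn
    push_cast at h2
    linarith
  have hs := Nat.find_spec hb
  have hmn := fun m => Nat.find_min (m := m) hb
  generalize Nat.find hb = k at hs hmn
  have hle : (S φ ψ θ)^[k] c + m ≤ c' := by
    cases k with
    | zero => simp only [Function.iterate_zero_apply]; linarith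
    | succ k => exact not_lt.1 (hmn k (by omega))
  refine ⟨k, m, hle, (H.claim (H.Q_transl (H.Q_it hc k) m) hc' hle ?_).symm⟩
  have := H.it_perZ θ 1 ((S φ ψ θ)^[k] c) m
  simp only [Function.iterate_one] at this
  rw [this]
  rwa [Function.iterate_succ_apply'] at hs

/-- Difference of `Sg` along a fiber is an integer, which is invariant under `φ 1`. -/
theorem MaxD.Sg_diff (H : MaxD α φ ψ ε N) (K : Coord φ ψ N h) {θ c c'} (hc : Q φ ψ N θ c)
    (hc' : Q φ ψ N θ c') : ∃ j : ℤ, Sg φ ψ N h θ c' = Sg φ ψ N h θ c + j ∧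
      Sg φ ψ N h (θ + (1:ℤ) • α) (φ 1 θ c') = Sg φ ψ N h (θ + (1:ℤ) • α) (φ 1 θ c) + j := by
  obtain ⟨k, m, hle, he⟩ := H.compare hc hc'
  refine ⟨k + N * m, ?_, ?_⟩
  · rw [← H.Sg_eq K (H.Q_transl (H.Q_it hc k) m) hle he, H.Sg_transl K, H.Sg_it K hc]
    push_cast; ring
  · have h1 := H.Q_shift (H.Q_transl (H.Q_it hc k) m) 1
    rw [← H.Sg_eq K h1 ((H.hφ.mono 1 θ).monotone hle) (by rw [H.S_shift, H.S_shift, he]),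
      H.hφ.perZ, ← H.it_shift, H.Sg_transl K, H.Sg_it K (H.Q_shift hc 1)]
    push_cast; ring

theorem MaxD.it_le (H : MaxD α φ ψ ε N) {θ c} (hc : Q φ ψ N θ c) (i : ℕ) :
    (S φ ψ θ)^[i] c ≤ c + i := by
  induction i with
  | zero => simp
  | succ i ih =>
    have h1 := H.Q_it hc i
    rw [Function.iterate_succ_apply']
    have h2 := H.le_it θ (N - 1) (S φ ψ θ ((S φ ψ θ)^[i] c))
    unfold Q at h1
    rw [H.it_eq] at h1
    push_cast; linarith

theorem MaxD.Sg_lim (H : MaxD α φ ψ ε N) (K : Coord φ ψ N h) {ι : Type*} {u : Ultrafilter ι}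
    {t : ι → T1} {θ} (ht : Tendsto t u (𝓝 θ)) {a : ι → ℝ} (ha : ∀ k, a k ∈ Set.Icc (0:ℝ) 1)
    (hq : ∀ k, Q φ ψ N (t k) (a k)) :
    ∃ c, Q φ ψ N θ c ∧ Tendsto (fun k => Sg φ ψ N h (t k) (a k)) u (𝓝 (Sg φ ψ N h θ c)) ∧
      Tendsto (fun k => Sg φ ψ N h (t k + (1:ℤ) • α) (φ 1 (t k) (a k))) u
        (𝓝 (Sg φ ψ N h (θ + (1:ℤ) • α) (φ 1 θ c))) := by
  have hex : ∀ i : ℕ, ∃ c, Tendsto (fun k => (S φ ψ (t k))^[i] (a k)) u (𝓝 c) := by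
    intro i
    refine ulim u _ 0 (1 + i) (Eventually.of_forall fun k => ?_)
    have h1 := H.le_it (t k) i (a k)
    have h2 := H.it_le (hq k) i
    have h3 := ha k
    exact ⟨by linarith [h3.1], by linarith [h3.2]⟩
  choose c hc using hex
  have hQ : ∀ i, Q φ ψ N θ (c i) := fun i =>
    H.Q_lim ht (hc i) (Eventually.of_forall fun k => H.Q_it (hq k) i)
  have h1 : ∀ i, (S φ ψ θ)^[i] (c 0) ≤ c i := fun i =>
    H.it_lim i ht (hc 0) (hc i) (Eventually.of_forall fun k => le_rfl)
  have h2 : ∀ i, i ≤ N → (S φ ψ θ)^[N - i] (c i) ≤ c 0 + 1 := fun i hi => by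
    refine H.it_lim (N - i) ht (hc i) ((hc 0).add_const 1) (Eventually.of_forall fun k => ?_)
    rw [← Function.iterate_add_apply, Nat.sub_add_cancel hi]
    exact hq k
  have h3 : ∀ i, i ≤ N → S φ ψ θ ((S φ ψ θ)^[i] (c 0)) = S φ ψ θ (c i) := by
    intro i hi
    refine (H.claim (H.Q_it (hQ 0) i) (hQ i) (h1 i) ?_).symm
    by_contra hlt
    push Not at hlt
    have h4 := H.it_mono θ (N - i) hlt
    rw [← Function.iterate_succ_apply, ← Function.iterate_add_apply] at h4
    have e : (N - i).succ + i = N + 1 := by omega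
    rw [e] at h4
    linarith [H.max θ (c 0), h2 i hi]
  refine ⟨c 0, hQ 0, ?_, ?_⟩
  · unfold Sg
    refine tendsto_finsetSum _ fun i hi => ?_
    rw [K.const θ _ _ (H.Q_it (hQ 0) i) (h1 i) (h3 i (Finset.mem_range.1 hi).le)]
    exact (K.cont.tendsto (θ, c i)).comp (ht.prodMk_nhds (hc i))
  · unfold Sg
    refine tendsto_finsetSum _ fun i hi => ?_
    simp only [H.it_shift]
    rw [K.const _ _ (φ 1 θ (c i)) (H.Q_shift (H.Q_it (hQ 0) i) 1)
      ((H.hφ.mono 1 θ).monotone (h1 i))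
      (by rw [H.S_shift, H.S_shift, h3 i (Finset.mem_range.1 hi).le])]
    exact (K.cont.tendsto (θ + (1:ℤ) • α, φ 1 θ (c i))).comp
      ((ht.add_const _).prodMk_nhds (H.hφ.tendsto ht (hc i) 1))

theorem MaxD.Sg_bdd (H : MaxD α φ ψ ε N) (K : Coord φ ψ N h) {θ c} (hc : Q φ ψ N θ c) :
    |Sg φ ψ N h θ c - N * c| ≤ N * (1 + N) := by
  have : Sg φ ψ N h θ c - N * c = ∑ i ∈ Finset.range N, (h θ ((S φ ψ θ)^[i] c) - c) := by
    simp [Sg]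
  rw [this]
  refine (Finset.abs_sum_le_sum_abs _ _).trans ?_
  refine (Finset.sum_le_card_nsmul _ _ (1 + (N:ℝ)) fun i hi => ?_).trans
    (by rw [Finset.card_range, nsmul_eq_mul])
  have h1 := H.le_it θ i c
  have h2 := H.it_le hc i
  have h3 := abs_le.1 (K.bdd θ ((S φ ψ θ)^[i] c))
  have h4 : (i : ℝ) ≤ N := by exact_mod_cast (Finset.mem_range.1 hi).le
  rw [abs_le]
  constructor <;> linarith [h3.1, h3.2]

theorem int_const (w : ℝ → ℝ) (hw : Continuous w) (hz : ∀ t, ((w t : ℝ) : T1) = 0) :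
    ∃ q : ℤ, ∀ t, w t = q := by
  have : ∀ t, ∃ z : ℤ, (z : ℝ) = w t := by
    intro t
    obtain ⟨z, hz⟩ := (AddCircle.coe_eq_zero_iff (1:ℝ)).1 (hz t)
    exact ⟨z, by simpa using hz⟩
  choose z hz using this
  have hzc : Continuous z := by
    rw [Int.isClosedEmbedding_coe_real.isEmbedding.continuous_iff]
    have : ((↑) : ℤ → ℝ) ∘ z = w := funext hz
    rw [this]; exact hw
  exact ⟨z 0, fun t => by rw [← hz t, PreconnectedSpace.constant inferInstance hzc (x := t) (y := 0)]⟩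

theorem MaxD.final {ω ρ : ℝ} (hω : α = (ω : T1)) (H : MaxD α φ ψ ε N)
    (hα : DenseRange (fun n : ℤ => n • α))
    (hρ : ∀ x, Tendsto (fun n : ℕ => (φ n 0 x - x) / n) atTop (𝓝 ρ)) :
    ∃ p q : ℤ, (N : ℝ) * ρ = q + p * ω := by
  obtain ⟨h, K⟩ := H.exists_coord hα
  choose b hb hQ using H.Q_ex hα
  have hG : Continuous fun θ : T1 => ((Sg φ ψ N h θ (b θ) : ℝ) : T1) := by
    rw [continuous_iff_ultrafilter]
    intro θ g hg
    obtain ⟨c, hc, h1, -⟩ := H.Sg_lim K (t := id) hg (a := b) hb hQ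
    obtain ⟨j, hj, -⟩ := H.Sg_diff K hc (hQ θ)
    have e : ((Sg φ ψ N h θ (b θ) : ℝ) : T1) = ((Sg φ ψ N h θ c : ℝ) : T1) := by
      rw [hj, AddCircle.coe_add]
      have : ((j : ℝ) : T1) = 0 := (AddCircle.coe_eq_zero_iff (1:ℝ)).2 ⟨j, by simp⟩
      rw [this, add_zero]
    rw [e]
    exact ((AddCircle.continuous_mk' (1:ℝ)).tendsto _).comp h1
  have hD : Continuous fun θ : T1 =>
      Sg φ ψ N h (θ + (1:ℤ) • α) (φ 1 θ (b θ)) - Sg φ ψ N h θ (b θ) := by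
    rw [continuous_iff_ultrafilter]
    intro θ g hg
    obtain ⟨c, hc, h1, h2⟩ := H.Sg_lim K (t := id) hg (a := b) hb hQ
    obtain ⟨j, hj, hj'⟩ := H.Sg_diff K hc (hQ θ)
    have := h2.sub h1
    rw [hj, hj', add_sub_add_right_eq_sub]
    exact this
  have cov := AddCircle.isCoveringMap_coe (1:ℝ)
  obtain ⟨g, ⟨-, hg⟩, -⟩ := cov.existsUnique_continuousMap_lifts
    (⟨fun t : ℝ => ((Sg φ ψ N h (t : T1) (b (t : T1)) : ℝ) : T1),
      hG.comp (AddCircle.continuous_mk' (1:ℝ))⟩ : C(ℝ, T1)) 0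
    (Sg φ ψ N h ((0:ℝ) : T1) (b ((0:ℝ) : T1))) rfl
  have hg : ∀ t : ℝ, ((g t : ℝ) : T1) = ((Sg φ ψ N h (t : T1) (b (t : T1)) : ℝ) : T1) :=
    fun t => congrFun hg t
  obtain ⟨p, hp⟩ := int_const (fun t => g (t + 1) - g t) (by fun_prop) (fun t => by
    have e : ((t + 1 : ℝ) : T1) = (t : T1) := AddCircle.coe_add_period 1 t
    rw [AddCircle.coe_sub, hg, hg, e, sub_self])
  obtain ⟨q, hq⟩ := int_const (fun t =>
      Sg φ ψ N h ((t : T1) + (1:ℤ) • α) (φ 1 t (b t)) - Sg φ ψ N h t (b t) - (g (t + ω) - g t))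
    (by
      refine Continuous.sub (hD.comp (AddCircle.continuous_mk' (1:ℝ))) (by fun_prop))
    (fun t => by
      have e : ((t + ω : ℝ) : T1) = (t : T1) + (1:ℤ) • α := by simp [hω]
      obtain ⟨j, hj, -⟩ := H.Sg_diff K (hQ ((t : T1) + (1:ℤ) • α)) (H.Q_shift (hQ t) 1)
      have hj0 : ((j : ℝ) : T1) = 0 := (AddCircle.coe_eq_zero_iff (1:ℝ)).2 ⟨j, by simp⟩
      rw [hj, AddCircle.coe_sub, AddCircle.coe_sub, AddCircle.coe_sub, AddCircle.coe_add, hg, hg,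
        e, hj0]
      abel)
  refine ⟨p, q, ?_⟩
  -- boundedness of g t - p t
  have hper : Function.Periodic (fun t => g t - p * t) 1 := by
    intro t
    have := hp t
    simp only at this ⊢
    linarith
  obtain ⟨M, hM⟩ : ∃ M, ∀ t, |g t - p * t| ≤ M := by
    have := hper.isBounded_of_continuous one_ne_zero (by fun_prop)
    obtain ⟨M, hM⟩ := this.exists_norm_le
    exact ⟨M, fun t => hM _ ⟨t, rfl⟩⟩
  have hcQ : ∀ n : ℤ, Q φ ψ N (n • α) (φ n 0 (b 0)) := fun n => by
    simpa using H.Q_shift (hQ 0) n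
  have hrec : ∀ n : ℕ, Sg φ ψ N h ((n : ℤ) • α) (φ n 0 (b 0)) =
      Sg φ ψ N h 0 (b 0) + n * q + g (n * ω) - g 0 := by
    intro n
    induction n with
    | zero => simp [H.hφ.zero]
    | succ n ih =>
      obtain ⟨j, hj, hj'⟩ := H.Sg_diff K (hQ ((n : ℤ) • α)) (hcQ n)
      have e : (((n : ℝ) * ω : ℝ) : T1) = (n : ℤ) • α := by
        simp [hω]
      have h1 := hq (n * ω)
      simp only [e] at h1
      have h2 := H.hφ.succ n 0 (b 0)
      have e2 : ((n : ℤ) + 1) • α = (n : ℤ) • α + (1 : ℤ) • α := add_smul _ _ _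
      have e3 : (((n + 1 : ℕ)) : ℝ) * ω = n * ω + ω := by push_cast; ring
      rw [e3]
      push_cast
      rw [h2, e2, zero_add, hj']
      linarith
  have hlim : Tendsto (fun n : ℕ => (N : ℝ) * ((φ n 0 (b 0) - b 0) / n) - (q + p * ω)) atTop
      (𝓝 ((N : ℝ) * ρ - (q + p * ω))) := ((hρ (b 0)).const_mul _).sub_const _
  have hlim0 : Tendsto (fun n : ℕ => (N : ℝ) * ((φ n 0 (b 0) - b 0) / n) - (q + p * ω)) atTop
      (𝓝 0) := by
    set R : ℝ := N * (1 + N) + M + |Sg φ ψ N h 0 (b 0) - g 0 - N * b 0| with hR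
    have hz : Tendsto (fun n : ℕ => R / (n : ℝ)) atTop (𝓝 0) :=
      tendsto_const_div_atTop_nhds_zero_nat R
    refine squeeze_zero_norm' ?_ hz
    filter_upwards [eventually_gt_atTop 0] with n hn
    have hn' : (0:ℝ) < n := by exact_mod_cast hn
    have e : (N : ℝ) * ((φ n 0 (b 0) - b 0) / n) - (q + p * ω) =
        (N * (φ n 0 (b 0) - b 0) - n * (q + p * ω)) / n := by
      field_simp
    rw [e, Real.norm_eq_abs, abs_div, abs_of_pos hn']
    refine div_le_div_of_nonneg_right ?_ hn'.le
    have a1 := abs_le.1 (H.Sg_bdd K (hcQ n))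
    rw [hrec n] at a1
    have a2 := abs_le.1 (hM (n * ω))
    have a3 := neg_abs_le (Sg φ ψ N h 0 (b 0) - g 0 - N * b 0)
    have a4 := le_abs_self (Sg φ ψ N h 0 (b 0) - g 0 - N * b 0)
    rw [abs_le, hR]
    constructor <;> nlinarith [a1.1, a1.2, a2.1, a2.2]
  have := tendsto_nhds_unique hlim hlim0
  linarith

end
end Qpf

namespace Qpf

theorem inv_cont {ω : ℝ} {F : T1 → ℝ → ℝ} (hF : IsQpfLift ω F) :
    ∃ G : T1 → ℝ → ℝ, (Continuous fun p : T1 × ℝ => G p.1 p.2) ∧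
      (∀ θ x, G θ (F θ x) = x) ∧ ∀ θ x, F θ (G θ x) = x := by
  choose G hG using hF.surj
  refine ⟨G, ?_, fun θ x => (hF.mono θ).injective (hG θ _), hG⟩
  rw [continuous_iff_continuousAt]
  rintro ⟨θ, y⟩
  have hc : ∀ a, Continuous fun p : T1 × ℝ => F p.1 a := fun a =>
    hF.cont.comp (by fun_prop : Continuous fun p : T1 × ℝ => (p.1, a))
  refine tendsto_order.2 ⟨fun a ha => ?_, fun a ha => ?_⟩
  · have h1 : F θ a < y := by have := hF.mono θ ha; rwa [hG] at this
    have := ((hc a).tendsto (θ, y)).eventually_lt (continuous_snd.tendsto (θ, y)) h1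
    filter_upwards [this] with p hp
    rw [← (hF.mono p.1).lt_iff_lt, hG]; exact hp
  · have h1 : y < F θ a := by have := hF.mono θ ha; rwa [hG] at this
    have := (continuous_snd.tendsto (θ, y)).eventually_lt ((hc a).tendsto (θ, y)) h1
    filter_upwards [this] with p hp
    rw [← (hF.mono p.1).lt_iff_lt, hG]; exact hp

/-- Fibered homeomorphisms over the rotation by `β`. -/
structure Fib (g : (T1 × ℝ) ≃ₜ (T1 × ℝ)) (β : T1) : Prop where
  fst : ∀ p, (g p).1 = p.1 + β
  mono : ∀ θ, StrictMono fun x => (g (θ, x)).2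
  per : ∀ θ x, (g (θ, x + 1)).2 = (g (θ, x)).2 + 1

theorem Fib.eq {g β} (h : Fib g β) (θ x) : g (θ, x) = (θ + β, (g (θ, x)).2) :=
  Prod.ext (h.fst _) rfl

theorem Fib.mul {g g' β β'} (h : Fib g β) (h' : Fib g' β') : Fib (g * g') (β' + β) := by
  have e : ∀ p, (g * g') p = g (g' p) := fun p => rfl
  refine ⟨fun p => ?_, fun θ => ?_, fun θ x => ?_⟩
  · rw [e, h.fst, h'.fst, add_assoc]
  · intro x y hxy
    simp only [e]
    rw [h'.eq θ x, h'.eq θ y]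
    exact h.mono _ (h'.mono θ hxy)
  · simp only [e]
    rw [h'.eq θ x, h'.eq θ (x + 1), h'.per, h.per]

theorem Fib.inv {g β} (h : Fib g β) : Fib g⁻¹ (-β) := by
  have e : ∀ p, g (g⁻¹ p) = p := fun p => g.apply_symm_apply p
  have e1 : ∀ p, (g⁻¹ p).1 = p.1 + -β := fun p => by
    have := h.fst (g⁻¹ p)
    rw [e] at this
    rw [this]; abel
  have e2 : ∀ θ x, g⁻¹ (θ, x) = (θ + -β, (g⁻¹ (θ, x)).2) := fun θ x => Prod.ext (e1 _) rfl
  have e3 : ∀ θ x, (g (θ + -β, (g⁻¹ (θ, x)).2)).2 = x := fun θ x => by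
    rw [← e2, e]
  refine ⟨e1, fun θ x y hxy => ?_, fun θ x => ?_⟩
  · refine (h.mono (θ + -β)).lt_iff_lt.1 ?_
    simp only [e3]; exact hxy
  · refine (h.mono (θ + -β)).injective ?_
    simp only [e3, h.per]

theorem Fib.zpow {g β} (h : Fib g β) (n : ℤ) : Fib (g ^ n) (n • β) := by
  induction n using Int.induction_on with
  | zero =>
    have e : ∀ p, (g ^ (0:ℤ)) p = p := fun p => by rw [zpow_zero]; rfl
    refine ⟨fun p => by simp [e], fun θ x y hxy => by simpa [e] using hxy, fun θ x => by simp [e]⟩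
  | succ n ih =>
    rw [zpow_add_one, add_smul, one_smul, add_comm]
    exact ih.mul h
  | pred n ih =>
    rw [zpow_sub_one, sub_smul, one_smul, sub_eq_add_neg, add_comm]
    exact ih.mul h.inv

theorem exists_coc {ω : ℝ} {F : T1 → ℝ → ℝ} (hF : IsQpfLift ω F) :
    ∃ φ, Coc (ω : T1) φ ∧ (∀ θ x, φ 1 θ x = F θ x) ∧
      ∀ n : ℕ, ∀ θ x, fiberIter ω F n θ x = φ n θ x := by
  obtain ⟨G, hGc, hGF, hFG⟩ := inv_cont hF
  let g : (T1 × ℝ) ≃ₜ (T1 × ℝ) :=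
    { toFun := fun p => (p.1 + (ω : T1), F p.1 p.2)
      invFun := fun p => (p.1 - (ω : T1), G (p.1 - (ω : T1)) p.2)
      left_inv := fun p => by
        refine Prod.ext ?_ ?_
        · simp
        · simp [hGF]
      right_inv := fun p => by
        refine Prod.ext ?_ ?_
        · simp
        · simp [hFG]
      continuous_toFun := (by fun_prop : Continuous fun p : T1 × ℝ => p.1 + (ω : T1)).prodMk hF.cont
      continuous_invFun := by
        have h1 : Continuous fun p : T1 × ℝ => p.1 - (ω : T1) := by fun_prop
        exact h1.prodMk (hGc.comp (h1.prodMk continuous_snd)) }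
  have hgd : ∀ θ x, g (θ, x) = (θ + (ω : T1), F θ x) := fun θ x => rfl
  have hg : Fib g (ω : T1) := ⟨fun p => rfl, fun θ => hF.mono θ, fun θ x => hF.per θ x⟩
  have hz := hg.zpow
  have hC : Coc (ω : T1) fun n θ x => ((g ^ n) (θ, x)).2 := by
    refine ⟨?_, ?_, ?_, ?_, ?_⟩
    · intro θ x; simp only [zpow_zero]; rfl
    · intro m n θ x
      simp only [zpow_add]
      rw [← (hz n).eq]; rfl
    · intro n; exact continuous_snd.comp (g ^ n).continuous
    · intro n θ; exact (hz n).mono θ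
    · intro n θ x; exact (hz n).per θ x
  refine ⟨_, hC, fun θ x => by simp only [zpow_one]; rfl, ?_⟩
  intro n
  induction n with
  | zero => intro θ x; exact (hC.zero θ x).symm
  | succ n ih =>
    intro θ x
    have := hC.add n 1 θ x
    push_cast
    rw [this, fiberIter, ih]
    simp only [zpow_one, one_smul]
    rfl

end Qpf
namespace Qpf
section
variable {α : T1} {φ ψ : ℤ → T1 → ℝ → ℝ} {ε : ℝ}

theorem Pert.exists_close (H : Pert α φ ψ ε) {ρ ρp : ℝ}
    (hρ : Tendsto (fun n : ℕ => (φ n 0 0 - 0) / n) atTop (𝓝 ρ))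
    (hρp : Tendsto (fun n : ℕ => (ψ n 0 0 - 0) / n) atTop (𝓝 ρp)) (hle : ρp ≤ ρ)
    (n : ℕ) (hn : 0 < n) : ∃ θ x, ψ n θ x ≤ φ n θ x + 1 := by
  by_contra hc
  push Not at hc
  have key : ∀ k : ℕ, φ ((k * n : ℕ) : ℤ) 0 0 + k ≤ ψ ((k * n : ℕ) : ℤ) 0 0 := by
    intro k
    induction k with
    | zero => simp [H.hφ.zero, H.hψ.zero]
    | succ k ih =>
      have e : (((k + 1) * n : ℕ) : ℤ) = (n : ℤ) + ((k * n : ℕ) : ℤ) := by push_cast; ring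
      rw [e, H.hφ.add, H.hψ.add]
      have h1 := hc (0 + ((k * n : ℕ) : ℤ) • α) (ψ ((k * n : ℕ) : ℤ) 0 0)
      have h2 := (H.hφ.mono n (0 + ((k * n : ℕ) : ℤ) • α)).monotone ih
      have h3 := H.hφ.perZ n (0 + ((k * n : ℕ) : ℤ) • α) (φ ((k * n : ℕ) : ℤ) 0 0) k
      push_cast at h1 h2 h3 ⊢
      linarith
  have hsub : Tendsto (fun k : ℕ => k * n) atTop atTop := tendsto_id.atTop_mul_const' hn
  have l1 := (hρ.comp hsub).add_const (1 / (n : ℝ))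
  have l2 := hρp.comp hsub
  have hn' : (0:ℝ) < n := by exact_mod_cast hn
  have := le_of_tendsto_of_tendsto l1 l2 (by
    filter_upwards [eventually_gt_atTop 0] with k hk
    have hk' : (0:ℝ) < k := by exact_mod_cast hk
    simp only [Function.comp]
    have e : (1 : ℝ) / n = k / ((k * n : ℕ) : ℝ) := by push_cast; field_simp
    rw [e, ← add_div]
    refine div_le_div_of_nonneg_right ?_ (by positivity)
    linarith [key k])
  have : 0 < 1 / (n : ℝ) := by positivity
  linarith

theorem Pert.exists_seq (H : Pert α φ ψ ε)
    (hcl : ∀ n : ℕ, 0 < n → ∃ θ x, ψ n θ x ≤ φ n θ x + 1) (k : ℕ) :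
    ∃ θ x y, x ∈ Set.Icc (0:ℝ) 1 ∧ ∀ m : ℤ, -k ≤ m → m ≤ k →
      φ m θ x ≤ ψ m θ y ∧ ψ m θ y ≤ φ m θ (x + 1) := by
  obtain ⟨θ, x, h⟩ := hcl (2 * k + 2) (by omega)
  refine ⟨θ + (k : ℤ) • α, φ k θ x + (-⌊φ k θ x⌋ : ℤ), ψ k θ x + (-⌊φ k θ x⌋ : ℤ), norm01 _, ?_⟩
  intro m h1 h2
  have e : φ k θ x + ((-⌊φ k θ x⌋ : ℤ) : ℝ) + 1 = φ k θ (x + 1) + ((-⌊φ k θ x⌋ : ℤ) : ℝ) := by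
    rw [H.hφ.per]; ring
  rw [e, H.hφ.perZ, H.hφ.perZ, H.hψ.perZ, ← H.hφ.add, ← H.hφ.add, ← H.hψ.add]
  constructor
  · have := H.le_of_le (n := 0) (m := m + k) (θ := θ) (x := x) (y := x)
      (by rw [H.hφ.zero, H.hψ.zero]) (by omega)
    linarith
  · have := H.ge_of_ge (n := ((2 * k + 2 : ℕ) : ℤ)) (m := m + k) (θ := θ) (x := x + 1) (y := x)
      (by rw [H.hφ.per]; exact h) (by push_cast; omega)
    linarith

theorem Pert.bounded (H : Pert α φ ψ ε) (hα : DenseRange (fun n : ℤ => n • α))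
    (hcl : ∀ n : ℕ, 0 < n → ∃ θ x, ψ n θ x ≤ φ n θ x + 1) : PertB α φ ψ ε := by
  have ex : ∃ θ x, C φ ψ θ x (x + 1) := by
    choose t a b ha h using H.exists_seq hcl
    let u : Ultrafilter ℕ := hyperfilter ℕ
    have hu : (u : Filter ℕ) ≤ atTop := Nat.hyperfilter_le_atTop
    obtain ⟨θ, hθ⟩ := ulimT u t
    obtain ⟨x, hx⟩ := ulim u a 0 1 (Eventually.of_forall ha)
    obtain ⟨y, hy⟩ := ulim u b 0 2 (Eventually.of_forall fun k => by
      have := h k 0 (by omega) (by omega)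
      rw [H.hφ.zero, H.hφ.zero, H.hψ.zero] at this
      have h2 := ha k
      exact ⟨by linarith [h2.1, this.1], by linarith [h2.2, this.2]⟩)
    have hev : ∀ m : ℤ, ∀ᶠ k : ℕ in u, -(k:ℤ) ≤ m ∧ m ≤ k := fun m => hu (by
      filter_upwards [eventually_ge_atTop m.natAbs] with k hk
      omega)
    refine ⟨θ, x, y, Le.lim H.hφ H.hψ hθ hx hy fun m => ?_,
      Le.lim H.hψ H.hφ hθ hy (hx.add_const 1) fun m => ?_⟩
    · filter_upwards [hev m] with k hk using (h k m hk.1 hk.2).1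
    · filter_upwards [hev m] with k hk using (h k m hk.1 hk.2).2
  refine ⟨H, fun θ => ?_⟩
  have hn : ∀ {θ x}, C φ ψ θ x (x + 1) → ∃ x ∈ Set.Icc (0:ℝ) 1, C φ ψ θ x (x + 1) := by
    intro θ x h
    refine ⟨_, norm01 x, ?_⟩
    have := H.C_transl h (-⌊x⌋)
    rwa [add_right_comm] at this
  have := dense_closed (P := fun θ => ∃ x ∈ Set.Icc (0:ℝ) 1, C φ ψ θ x (x + 1)) hα ?_ ?_ ?_ θ
  · obtain ⟨x, -, h⟩ := this
    exact ⟨x, h⟩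
  · obtain ⟨θ, x, h⟩ := ex
    exact ⟨θ, hn h⟩
  · rw [isClosed_iff_ultrafilter]
    intro t u hu hs
    have h' : ∀ θ, ∃ x, (∃ x ∈ Set.Icc (0:ℝ) 1, C φ ψ θ x (x + 1)) →
        x ∈ Set.Icc (0:ℝ) 1 ∧ C φ ψ θ x (x + 1) := by
      intro θ
      by_cases hk : ∃ x ∈ Set.Icc (0:ℝ) 1, C φ ψ θ x (x + 1)
      · obtain ⟨y, hy⟩ := hk
        exact ⟨y, fun _ => hy⟩
      · exact ⟨0, fun h => absurd h hk⟩
    choose f hf using h'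
    have hs' : ∀ᶠ θ in u, f θ ∈ Set.Icc (0:ℝ) 1 ∧ C φ ψ θ (f θ) (f θ + 1) := by
      filter_upwards [hs] with θ hθ using hf θ hθ
    obtain ⟨c, hc⟩ := ulim u f 0 1 (hs'.mono fun _ h => h.1)
    exact hn (H.C_lim (t := id) hu hc (hc.add_const 1) (hs'.mono fun _ h => h.2))
  · rintro θ ⟨x, -, h⟩ k
    have := H.C_shift h k
    rw [H.hφ.per] at this
    exact hn this

end

theorem IsQpfLift.add_const {ω : ℝ} {F : T1 → ℝ → ℝ} (hF : IsQpfLift ω F) (ε : ℝ) :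
    IsQpfLift ω fun θ x => F θ x + ε := by
  refine ⟨hF.cont.add continuous_const, fun θ x y h => ?_, fun θ y => ?_, fun θ x => ?_⟩
  · have := hF.mono θ h
    linarith
  · obtain ⟨x, hx⟩ := hF.surj θ (y - ε)
    exact ⟨x, by simp [hx]⟩
  · simp only [hF.per]; ring

theorem strict_up {ω : ℝ} (hω : Irrational ω) {F : T1 → ℝ → ℝ} (hF : IsQpfLift ω F)
    {ρ : ℝ} (hρ : HasRotNum ω F ρ) (hind : RatIndep ω ρ) {ε : ℝ} (hε : 0 < ε)
    {ρp : ℝ} (hρp : HasRotNum ω (fun θ x => F θ x + ε) ρp) : ρ < ρp := by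
  by_contra hc
  push Not at hc
  obtain ⟨φ, hφ, hφ1, hφn⟩ := exists_coc hF
  obtain ⟨ψ, hψ, hψ1, hψn⟩ := exists_coc (IsQpfLift.add_const hF ε)
  have hα : DenseRange (fun n : ℤ => n • (ω : T1)) :=
    AddCircle.denseRange_zsmul_coe_iff.2 (by simpa using hω)
  have H : Pert (ω : T1) φ ψ ε := ⟨hφ, hψ, hε, fun θ x => by rw [hφ1, hψ1]⟩
  have r1 : ∀ x, Tendsto (fun n : ℕ => (φ n 0 x - x) / n) atTop (𝓝 ρ) := fun x => by
    simpa only [hφn] using hρ 0 x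
  have r2 : ∀ x, Tendsto (fun n : ℕ => (ψ n 0 x - x) / n) atTop (𝓝 ρp) := fun x => by
    simpa only [hψn] using hρp 0 x
  have HB := H.bounded hα (H.exists_close (r1 0) (r2 0) hc)
  obtain ⟨N, HN⟩ := HB.exists_max
  obtain ⟨p, q, e⟩ := HN.final rfl hα r1
  have := (hind p (-N) q (by push_cast; linarith)).2.1
  have := HN.Npos
  omega

theorem strict_down {ω : ℝ} (hω : Irrational ω) {F : T1 → ℝ → ℝ} (hF : IsQpfLift ω F)
    {ρ : ℝ} (hρ : HasRotNum ω F ρ) (hind : RatIndep ω ρ) {ε : ℝ} (hε : 0 < ε)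
    {ρm : ℝ} (hρm : HasRotNum ω (fun θ x => F θ x + (-ε)) ρm) : ρm < ρ := by
  have hit : ∀ (G : T1 → ℝ → ℝ) (n : ℕ) (θ : T1) (x : ℝ),
      fiberIter ω (fun θ x => - G θ (-x)) n θ x = - fiberIter ω G n θ (-x) := by
    intro G n
    induction n with
    | zero => intro θ x; simp [fiberIter]
    | succ n ih => intro θ x; simp [fiberIter, ih]
  have hrot : ∀ (G : T1 → ℝ → ℝ) (r : ℝ), HasRotNum ω G r →
      HasRotNum ω (fun θ x => - G θ (-x)) (-r) := by
    intro G r h θ x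
    refine (h θ (-x)).neg.congr fun n => ?_
    rw [hit]; ring
  have hF' : IsQpfLift ω (fun θ x => - F θ (-x)) := by
    refine ⟨?_, fun θ x y h => ?_, fun θ y => ?_, fun θ x => ?_⟩
    · exact (hF.cont.comp (by fun_prop : Continuous fun p : T1 × ℝ => (p.1, -p.2))).neg
    · exact neg_lt_neg (hF.mono θ (neg_lt_neg h))
    · obtain ⟨x, hx⟩ := hF.surj θ (-y)
      exact ⟨-x, by simp [hx]⟩
    · have := hF.per θ (-(x + 1))
      have e : -(x + 1) + 1 = -x := by ring
      rw [e] at this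
      simp only [this]; ring
  have hm := hrot _ _ hρm
  have e : (fun (θ : T1) (x : ℝ) => -(F θ (-x) + (-ε))) = fun θ x => - F θ (-x) + ε := by
    funext θ x; ring
  simp only [e] at hm
  have := strict_up hω hF' (hrot _ _ hρ) (fun a b c h => by
    have := hind a (-b) c (by push_cast; linarith)
    omega) hε hm
  linarith

end Qpf

/-- Theorem A, second part: if `ω`, `ρ(f)` and `1` are rationally
independent, then the fibered rotation number is strictly monotone at `f`. -/
theorem thmA_rationally_independent_strictly_monotone
    (ω : ℝ) (hω : Irrational ω)
    (F : T1 → ℝ → ℝ) (hF : IsQpfLift ω F)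
    (ρ : ℝ) (hρ : HasRotNum ω F ρ)
    (hind : RatIndep ω ρ)
    (ε : ℝ) (hε : 0 < ε)
    (ρp : ℝ) (hρp : HasRotNum ω (fun θ x => F θ x + ε) ρp)
    (ρm : ℝ) (hρm : HasRotNum ω (fun θ x => F θ x + (-ε)) ρm) :
    ρm < ρ ∧ ρ < ρp :=
  ⟨Qpf.strict_down hω hF hρ hind hε hρm, Qpf.strict_up hω hF hρ hind hε hρp⟩
end
end

section
/- Let f be a quasiperiodically forced circle homeomorphism over an irrational ω with lift F whose fibered rotation number is ρ. Suppose the fibered rotation number is locked on one side: for some ε ≠ 0 the perturbed lift F_ε has fibered rotation number equal to ρ. Then ω, ρ and 1 are rationally dependent: there exists (a,b,c) ∈ ℤ³ \ {(0,0,0)} with aω + bρ + c = 0. -/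
open Filter Topology MeasureTheory
open scoped ENNReal

noncomputable section

/-- Averages along the orbit of `v`. -/
def orbAvg (v : UnitAddTorus (Fin 2)) (f : UnitAddTorus (Fin 2) → ℂ) (N : ℕ) : ℂ :=
  (N : ℂ)⁻¹ * ∑ n ∈ Finset.range N, f (n • v)

theorem torus_vol : (volume : Measure (UnitAddTorus (Fin 2))).real Set.univ = 1 := by
  rw [Measure.real, show (volume : Measure (UnitAddTorus (Fin 2))) =
    Measure.pi (fun _ => (volume : Measure UnitAddCircle)) from rfl, Measure.pi_univ]
  simp

theorem orbAvg_norm_le (v : UnitAddTorus (Fin 2)) (f : C(UnitAddTorus (Fin 2), ℂ)) (N : ℕ) :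
    ‖orbAvg v f N‖ ≤ ‖f‖ := by
  unfold orbAvg
  rw [norm_mul, norm_inv, Complex.norm_natCast]
  have h : ‖∑ n ∈ Finset.range N, f (n • v)‖ ≤ N * ‖f‖ := by
    refine (norm_sum_le _ _).trans ?_
    refine (Finset.sum_le_sum (fun n _ => f.norm_coe_le_norm (n • v))).trans ?_
    simp
  rcases Nat.eq_zero_or_pos N with rfl | hN
  · simp
  · have hN' : (0 : ℝ) < N := by exact_mod_cast hN
    rw [inv_mul_le_iff₀ hN']
    exact h

theorem mFourier_pt (k : Fin 2 → ℤ) (ω ρ : ℝ) :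
    UnitAddTorus.mFourier k ![(ω : UnitAddCircle), (ρ : UnitAddCircle)] =
      Complex.exp (2 * Real.pi * Complex.I * ((k 0 : ℂ) * ω + (k 1 : ℂ) * ρ)) := by
  rw [UnitAddTorus.mFourier]
  simp only [ContinuousMap.coe_mk, Fin.prod_univ_two]
  simp only [Matrix.cons_val_zero, Matrix.cons_val_one]
  rw [fourier_coe_apply, fourier_coe_apply, ← Complex.exp_add]
  congr 1
  push_cast
  ring

theorem mFourier_add_pt (k : Fin 2 → ℤ) (x y : UnitAddTorus (Fin 2)) :
    UnitAddTorus.mFourier k (x + y) = UnitAddTorus.mFourier k x * UnitAddTorus.mFourier k y := by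
  simp only [UnitAddTorus.mFourier, ContinuousMap.coe_mk, Fin.prod_univ_two, Pi.add_apply,
    fourier_apply, smul_add, AddCircle.toCircle_add, Circle.coe_mul]
  ring

theorem mFourier_nsmul_pt (k : Fin 2 → ℤ) (x : UnitAddTorus (Fin 2)) (n : ℕ) :
    UnitAddTorus.mFourier k (n • x) = UnitAddTorus.mFourier k x ^ n := by
  induction n with
  | zero => simp [UnitAddTorus.mFourier]
  | succ n ih => rw [succ_nsmul, mFourier_add_pt, ih, pow_succ]

theorem orbAvg_mFourier (v : UnitAddTorus (Fin 2)) (k : Fin 2 → ℤ)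
    (hk : k ≠ 0 → UnitAddTorus.mFourier k v ≠ 1) :
    Tendsto (orbAvg v (UnitAddTorus.mFourier k)) atTop
      (𝓝 (∫ x, UnitAddTorus.mFourier k x)) := by
  by_cases h0 : k = 0
  · subst h0
    rw [UnitAddTorus.mFourier_zero]
    have : (∫ x : UnitAddTorus (Fin 2), (1 : C(UnitAddTorus (Fin 2), ℂ)) x) = 1 := by simp [torus_vol]
    rw [this]
    refine tendsto_const_nhds.congr' ?_
    filter_upwards [eventually_gt_atTop 0] with N hN
    have : (N : ℂ) ≠ 0 := by exact_mod_cast hN.ne'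
    simp [orbAvg, this]
  · set z := UnitAddTorus.mFourier k v with hz
    have hz1 : z ≠ 1 := hk h0
    have hI : (∫ x, UnitAddTorus.mFourier k x) = 0 := by
      have h1 : (∫ x, UnitAddTorus.mFourier k (x + v)) = ∫ x, UnitAddTorus.mFourier k x :=
        integral_add_right_eq_self (fun x => UnitAddTorus.mFourier k x) v
      simp only [mFourier_add_pt, integral_mul_const] at h1
      have h2 : (∫ x, UnitAddTorus.mFourier k x) * (z - 1) = 0 := by
        rw [mul_sub, h1]; ring
      rcases mul_eq_zero.mp h2 with h | h
      · exact h
      · exact absurd (sub_eq_zero.mp h) hz1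
    rw [hI]
    have hzn : ‖z‖ ≤ 1 := by
      have := (UnitAddTorus.mFourier k).norm_coe_le_norm v
      rwa [UnitAddTorus.mFourier_norm] at this
    refine squeeze_zero_norm (a := fun N : ℕ => (N : ℝ)⁻¹ * (2 / ‖z - 1‖)) ?_ ?_
    · intro N
      unfold orbAvg
      simp only [mFourier_nsmul_pt]
      rw [← hz, geom_sum_eq hz1, norm_mul, norm_inv, Complex.norm_natCast, norm_div]
      gcongr
      calc ‖z ^ N - 1‖ ≤ ‖z ^ N‖ + ‖(1 : ℂ)‖ := norm_sub_le _ _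
        _ ≤ 1 + 1 := by
          rw [norm_pow, norm_one]
          gcongr
          exact pow_le_one₀ (norm_nonneg _) hzn
        _ = 2 := by norm_num
    · have := (tendsto_inv_atTop_nhds_zero_nat (𝕜 := ℝ)).mul_const (2 / ‖z - 1‖)
      simpa using this

theorem orbAvg_span (v : UnitAddTorus (Fin 2))
    (hv : ∀ k : Fin 2 → ℤ, k ≠ 0 → UnitAddTorus.mFourier k v ≠ 1)
    (f : C(UnitAddTorus (Fin 2), ℂ))
    (hf : f ∈ Submodule.span ℂ (Set.range (UnitAddTorus.mFourier (d := Fin 2)))) :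
    Tendsto (orbAvg v f) atTop (𝓝 (∫ x, f x)) := by
  induction hf using Submodule.span_induction with
  | mem f hf =>
    obtain ⟨k, rfl⟩ := hf
    exact orbAvg_mFourier v k (hv k)
  | zero =>
    have : orbAvg v (0 : C(UnitAddTorus (Fin 2), ℂ)) = fun _ => 0 := by
      funext N; simp [orbAvg]
    rw [this]; simp
  | add f g _ _ hf hg =>
    have h1 : (∫ x, (f + g) x) = (∫ x, f x) + ∫ x, g x := by
      simp only [ContinuousMap.add_apply]
      exact integral_add (f.continuous.integrable_of_hasCompactSupport (HasCompactSupport.of_compactSpace _))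
        (g.continuous.integrable_of_hasCompactSupport (HasCompactSupport.of_compactSpace _))
    rw [h1]
    refine (hf.add hg).congr fun N => ?_
    simp [orbAvg, Finset.sum_add_distrib, mul_add]
  | smul c f _ hf =>
    have h1 : (∫ x, (c • f) x) = c * ∫ x, f x := by
      simp only [ContinuousMap.smul_apply, smul_eq_mul, integral_const_mul]
    rw [h1]
    refine (hf.const_mul c).congr fun N => ?_
    simp only [orbAvg, ContinuousMap.smul_apply, smul_eq_mul, ← Finset.mul_sum]
    ring

theorem orbAvg_all (v : UnitAddTorus (Fin 2))
    (hv : ∀ k : Fin 2 → ℤ, k ≠ 0 → UnitAddTorus.mFourier k v ≠ 1)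
    (f : C(UnitAddTorus (Fin 2), ℂ)) :
    Tendsto (orbAvg v f) atTop (𝓝 (∫ x, f x)) := by
  rw [Metric.tendsto_atTop]
  intro r hr
  have hmem : f ∈ (Submodule.span ℂ
      (Set.range (UnitAddTorus.mFourier (d := Fin 2)))).topologicalClosure := by
    rw [UnitAddTorus.span_mFourier_closure_eq_top]; trivial
  obtain ⟨g, hg, hfg⟩ := Metric.mem_closure_iff.mp hmem (r / 3) (by positivity)
  obtain ⟨N0, hN0⟩ := (Metric.tendsto_atTop.mp (orbAvg_span v hv g hg)) (r / 3) (by positivity)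
  refine ⟨N0, fun N hN => ?_⟩
  have h1 := hN0 N hN
  rw [dist_eq_norm] at h1 hfg ⊢
  have h2 : ‖orbAvg v f N - orbAvg v g N‖ ≤ ‖f - g‖ := by
    have := orbAvg_norm_le v (f - g) N
    have e : orbAvg v (f - g : C(UnitAddTorus (Fin 2), ℂ)) N = orbAvg v f N - orbAvg v g N := by
      simp [orbAvg, mul_sub]
    rwa [e] at this
  have h3 : ‖(∫ x, g x) - ∫ x, f x‖ ≤ ‖f - g‖ := by
    rw [← integral_sub (g.continuous.integrable_of_hasCompactSupport (HasCompactSupport.of_compactSpace _))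
      (f.continuous.integrable_of_hasCompactSupport (HasCompactSupport.of_compactSpace _))]
    refine (norm_integral_le_of_norm_le_const (C := ‖f - g‖) (ae_of_all _ fun x => ?_)).trans ?_
    · rw [norm_sub_rev]
      exact (f - g).norm_coe_le_norm x
    · simp [torus_vol]
  have e : orbAvg v f N - ∫ x, f x = (orbAvg v f N - orbAvg v g N) + (orbAvg v g N - ∫ x, g x)
      + ((∫ x, g x) - ∫ x, f x) := by ring
  rw [e]
  have := norm_add₃_le (a := orbAvg v f N - orbAvg v g N) (b := orbAvg v g N - ∫ x, g x)
    (c := (∫ x, g x) - ∫ x, f x)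
  linarith

theorem torus_hit (v : UnitAddTorus (Fin 2))
    (hv : ∀ k : Fin 2 → ℤ, k ≠ 0 → UnitAddTorus.mFourier k v ≠ 1)
    (y : UnitAddTorus (Fin 2)) (r : ℝ) (hr : 0 < r) (M : ℕ) :
    ∃ n, M ≤ n ∧ dist (n • v) y < r := by
  by_contra hcon
  push Not at hcon
  let φ : UnitAddTorus (Fin 2) → ℝ := fun x => max 0 (r - dist x y)
  have hφc : Continuous φ := by fun_prop
  have hpos : 0 < ∫ x, φ x := by
    refine hφc.integral_pos_of_hasCompactSupport_nonneg_nonzero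
      (HasCompactSupport.of_compactSpace _) (fun x => le_max_left _ _) (x := y) ?_
    simp only [φ, dist_self, sub_zero]
    exact (lt_max_of_lt_right hr).ne'
  let f : C(UnitAddTorus (Fin 2), ℂ) := ⟨fun x => (φ x : ℂ), by fun_prop⟩
  have hT := orbAvg_all v hv f
  have hI : (∫ x, f x) = ((∫ x, φ x : ℝ) : ℂ) := integral_ofReal
  have h0 : Tendsto (orbAvg v f) atTop (𝓝 0) := by
    have hs : ∀ N, M ≤ N → ∑ n ∈ Finset.range N, f (n • v) = ∑ n ∈ Finset.range M, f (n • v) := by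
      intro N hN
      symm
      refine Finset.sum_subset (Finset.range_mono hN) fun n _ hn => ?_
      have hn' : M ≤ n := by simpa using hn
      have := hcon n hn'
      simp only [f, φ, ContinuousMap.coe_mk]
      rw [max_eq_left (by linarith)]
      simp
    have ht := (tendsto_inv_atTop_nhds_zero_nat (𝕜 := ℂ)).mul_const
      (∑ n ∈ Finset.range M, f (n • v))
    rw [zero_mul] at ht
    refine ht.congr' ?_
    filter_upwards [eventually_ge_atTop M] with N hN
    rw [orbAvg, hs N hN]
  have := tendsto_nhds_unique hT h0
  rw [hI] at this
  exact hpos.ne' (by exact_mod_cast this)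

theorem kron (ω ρ : ℝ)
    (hind : ∀ a b c : ℤ, (a : ℝ) * ω + (b : ℝ) * ρ + (c : ℝ) = 0 → a = 0 ∧ b = 0 ∧ c = 0)
    (y z : T1) (r : ℝ) (hr : 0 < r) (M : ℕ) :
    ∃ n : ℕ, M ≤ n ∧ dist (n • (ω : T1)) y < r ∧ dist (n • (ρ : T1)) z < r := by
  obtain ⟨n, hn, hd⟩ := torus_hit ![(ω : UnitAddCircle), (ρ : UnitAddCircle)] (by
    intro k hk h
    rw [mFourier_pt, Complex.exp_eq_one_iff] at h
    obtain ⟨m, hm⟩ := h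
    have hne : (2 * Real.pi * Complex.I : ℂ) ≠ 0 := Complex.two_pi_I_ne_zero
    have h1 : ((k 0 : ℂ) * ω + (k 1 : ℂ) * ρ) = m := by
      apply mul_left_cancel₀ hne
      rw [hm]; ring
    have h2 : ((k 0 : ℝ) * ω + (k 1 : ℝ) * ρ) = m := by exact_mod_cast h1
    have := hind (k 0) (k 1) (-m) (by push_cast; linarith)
    apply hk
    funext i
    fin_cases i
    · exact this.1
    · exact this.2.1) ![y, z] r hr M
  rw [dist_pi_lt_iff hr] at hd
  exact ⟨n, hn, by simpa using hd 0, by simpa using hd 1⟩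

theorem fi_mono {ω : ℝ} {F : T1 → ℝ → ℝ} (hF : ∀ θ, Monotone (F θ)) (n : ℕ) (θ : T1) :
    Monotone (fiberIter ω F n θ) := by
  induction n generalizing θ with
  | zero => exact monotone_id
  | succ n ih => exact fun x y h => ih _ (hF θ h)

theorem lift_int {F : T1 → ℝ → ℝ} (hF : ∀ θ x, F θ (x + 1) = F θ x + 1) (θ : T1) (x : ℝ)
    (k : ℤ) : F θ (x + k) = F θ x + k := by
  induction k using Int.induction_on with
  | zero => simp
  | succ i ih =>
    have := hF θ (x + (i : ℤ))
    push_cast at ih this ⊢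
    rw [← add_assoc, this, ih]; ring
  | pred i ih =>
    have := hF θ (x + ((-(i : ℤ) - 1 : ℤ) : ℝ))
    have e : x + ((-(i : ℤ) - 1 : ℤ) : ℝ) + 1 = x + ((-(i : ℤ) : ℤ) : ℝ) := by push_cast; ring
    rw [e, ih] at this
    push_cast at this ⊢
    linarith

theorem fi_int {ω : ℝ} {F : T1 → ℝ → ℝ} (hF : ∀ θ x, F θ (x + 1) = F θ x + 1) (n : ℕ) (θ : T1)
    (x : ℝ) (k : ℤ) : fiberIter ω F n θ (x + k) = fiberIter ω F n θ x + k := by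
  induction n generalizing θ x with
  | zero => rfl
  | succ n ih =>
    simp only [fiberIter]
    rw [lift_int hF, ih]

theorem fi_add {ω : ℝ} {F : T1 → ℝ → ℝ} (m n : ℕ) (θ : T1) (x : ℝ) :
    fiberIter ω F (m + n) θ x =
      fiberIter ω F n (θ + m • (ω : T1)) (fiberIter ω F m θ x) := by
  induction m generalizing θ x with
  | zero => simp [fiberIter]
  | succ m ih =>
    rw [show m + 1 + n = (m + n) + 1 by ring]
    simp only [fiberIter]
    rw [ih, succ_nsmul', add_assoc]

theorem fi_cmp {ω : ℝ} {F F' : T1 → ℝ → ℝ} (hF' : ∀ θ, Monotone (F' θ)) {δ : ℝ}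
    (h : ∀ θ θ' x, dist θ θ' < δ → F θ x ≤ F' θ' x) (n : ℕ) (θ θ' : T1) (x x' : ℝ)
    (hd : dist θ θ' < δ) (hx : x ≤ x') :
    fiberIter ω F n θ x ≤ fiberIter ω F' n θ' x' := by
  induction n generalizing θ θ' x x' with
  | zero => exact hx
  | succ n ih =>
    simp only [fiberIter]
    apply ih
    · rwa [dist_add_right]
    · exact (h θ θ' x hd).trans (hF' θ' hx)

theorem fi_cont {ω : ℝ} {F : T1 → ℝ → ℝ} (hF : Continuous fun p : T1 × ℝ => F p.1 p.2) (n : ℕ) :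
    Continuous fun p : T1 × ℝ => fiberIter ω F n p.1 p.2 := by
  induction n with
  | zero => exact continuous_snd
  | succ n ih =>
    simp only [fiberIter]
    exact ih.comp ((continuous_fst.add continuous_const).prodMk hF)

theorem lift_unif {ω : ℝ} {F : T1 → ℝ → ℝ} (hF : IsQpfLift ω F) (κ : ℝ) (hκ : 0 < κ) :
    ∃ δ > 0, ∀ θ θ' x, dist θ θ' < δ → F θ x ≤ F θ' x + κ := by
  have hK : IsCompact ((Set.univ : Set T1) ×ˢ Set.Icc (0 : ℝ) 1) :=
    isCompact_univ.prod isCompact_Icc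
  have hu := hK.uniformContinuousOn_of_continuous hF.cont.continuousOn
  rw [Metric.uniformContinuousOn_iff] at hu
  obtain ⟨δ, hδ, h⟩ := hu κ hκ
  refine ⟨δ, hδ, fun θ θ' x hd => ?_⟩
  have hfr : Int.fract x ∈ Set.Icc (0 : ℝ) 1 := ⟨Int.fract_nonneg x, (Int.fract_lt_one x).le⟩
  have h1 := h (θ, Int.fract x) ⟨trivial, hfr⟩ (θ', Int.fract x) ⟨trivial, hfr⟩
    (by rw [Prod.dist_eq]; simpa using hd)
  rw [Real.dist_eq] at h1
  have h2 := (abs_lt.mp h1).2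
  have e1 := lift_int hF.per θ (Int.fract x) ⌊x⌋
  have e2 := lift_int hF.per θ' (Int.fract x) ⌊x⌋
  rw [Int.fract_add_floor] at e1 e2
  simp only at h2
  linarith

theorem fi_ge {ω : ℝ} {F : T1 → ℝ → ℝ} (hF : IsQpfLift ω F) (n : ℕ) (θ : T1) (x y : ℝ) :
    fiberIter ω F n θ x + (y - x) - 1 ≤ fiberIter ω F n θ y := by
  have h1 : x + (⌊y - x⌋ : ℝ) ≤ y := by linarith [Int.floor_le (y - x)]
  have h2 := fi_mono (ω := ω) (fun θ => (hF.mono θ).monotone) n θ h1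
  rw [fi_int hF.per] at h2
  linarith [Int.lt_floor_add_one (y - x)]

/-- Some fiber on which the deviations are bounded above. -/
theorem exists_upper {ω : ℝ} {F : T1 → ℝ → ℝ} (hF : IsQpfLift ω F) {ρ : ℝ}
    (hρ : HasRotNum ω F ρ) : ∃ θ, ∀ n : ℕ, fiberIter ω F n θ 0 - n * ρ ≤ 2 := by
  by_contra hcon
  push Not at hcon
  have hopen : ∀ n : ℕ, IsOpen {θ : T1 | 2 < fiberIter ω F n θ 0 - n * ρ} := by
    intro n
    have hc : Continuous fun θ : T1 => fiberIter ω F n θ 0 :=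
      (fi_cont (ω := ω) hF.cont n).comp (continuous_id.prodMk continuous_const)
    exact isOpen_lt continuous_const (hc.sub continuous_const)
  obtain ⟨t, ht⟩ := isCompact_univ.elim_finite_subcover _ hopen (by
    intro θ _
    obtain ⟨n, hn⟩ := hcon θ
    exact Set.mem_iUnion.mpr ⟨n, hn⟩)
  obtain ⟨N, hN⟩ : ∃ N : ℕ, ∀ n ∈ t, n ≤ N := ⟨t.sup id, fun n hn => Finset.le_sup (f := id) hn⟩
  have hstep : ∀ θ : T1, ∃ n ≤ N, 2 < fiberIter ω F n θ 0 - n * ρ := by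
    intro θ
    have := ht (Set.mem_univ θ)
    simp only [Set.mem_iUnion] at this
    obtain ⟨n, hn, h⟩ := this
    exact ⟨n, hN n hn, h⟩
  have hgrow : ∀ k : ℕ, ∃ m ≤ k * N, (k : ℝ) ≤ fiberIter ω F m (0 : T1) 0 - m * ρ := by
    intro k
    induction k with
    | zero => exact ⟨0, by simp, by simp [fiberIter]⟩
    | succ k ih =>
      obtain ⟨m, hm, hk⟩ := ih
      obtain ⟨n, hn, h⟩ := hstep (0 + m • (ω : T1))
      refine ⟨m + n, by rw [Nat.succ_mul]; omega, ?_⟩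
      rw [fi_add]
      have := fi_ge hF n (0 + m • (ω : T1)) 0 (fiberIter ω F m (0 : T1) 0)
      push_cast
      linarith
  set e : ℝ := 1 / (2 * (N + 1)) with he
  have hepos : 0 < e := by positivity
  obtain ⟨C, hC⟩ : ∃ C, ∀ m : ℕ, fiberIter ω F m (0 : T1) 0 - m * ρ - m * e ≤ C := by
    have hb : IsBoundedUnder (· ≤ ·) atTop
        (fun m : ℕ => fiberIter ω F m (0 : T1) 0 - m * ρ - m * e) := by
      refine ⟨0, ?_⟩
      rw [eventually_map]
      have := (hρ 0 0).eventually (gt_mem_nhds (show ρ < ρ + e by linarith))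
      filter_upwards [this, eventually_gt_atTop 0] with m hm hm0
      have hm' : (0 : ℝ) < m := by exact_mod_cast hm0
      rw [div_lt_iff₀ hm'] at hm
      linarith
    obtain ⟨C, hC⟩ := hb.bddAbove_range
    exact ⟨C, fun m => hC ⟨m, rfl⟩⟩
  obtain ⟨k, hk⟩ := exists_nat_gt (2 * C)
  obtain ⟨m, hm, h⟩ := hgrow k
  have h1 := hC m
  have h2 : (m : ℝ) ≤ k * N := by exact_mod_cast hm
  have h3 : (m : ℝ) * e ≤ k / 2 := by
    rw [he, mul_one_div, div_le_iff₀ (by positivity)]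
    have : (0 : ℝ) ≤ k := by positivity
    nlinarith
  linarith

theorem exists_lower {ω : ℝ} {F : T1 → ℝ → ℝ} (hF : IsQpfLift ω F) {ρ : ℝ}
    (hρ : HasRotNum ω F ρ) : ∃ θ, ∀ n : ℕ, -2 ≤ fiberIter ω F n θ 0 - n * ρ := by
  let G : T1 → ℝ → ℝ := fun θ x => -F θ (-x)
  have hG : IsQpfLift ω G := by
    refine ⟨?_, ?_, ?_, ?_⟩
    · exact (hF.cont.comp (continuous_fst.prodMk continuous_snd.neg)).neg
    · intro θ x y h
      exact neg_lt_neg (hF.mono θ (neg_lt_neg h))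
    · intro θ y
      obtain ⟨x, hx⟩ := hF.surj θ (-y)
      exact ⟨-x, by simp [G, hx]⟩
    · intro θ x
      have := hF.per θ (-(x + 1))
      simp only [G]
      rw [show -(x + 1) + 1 = -x by ring] at this
      linarith
  have hit : ∀ n θ x, fiberIter ω G n θ x = -fiberIter ω F n θ (-x) := by
    intro n
    induction n with
    | zero => intro θ x; simp [fiberIter]
    | succ n ih => intro θ x; simp only [fiberIter]; rw [ih]; simp [G]
  have hGρ : HasRotNum ω G (-ρ) := by
    intro θ x
    refine (hρ θ (-x)).neg.congr fun n => ?_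
    rw [hit]; ring
  obtain ⟨θ, h⟩ := exists_upper hG hGρ
  refine ⟨θ, fun n => ?_⟩
  have := h n
  rw [hit, neg_zero] at this
  linarith

theorem pert_lift {ω : ℝ} {F : T1 → ℝ → ℝ} (hF : IsQpfLift ω F) (s : ℝ) :
    IsQpfLift ω (fun θ x => F θ x + s) := by
  refine ⟨hF.cont.add continuous_const, fun θ x y h => ?_, fun θ y => ?_, fun θ x => ?_⟩
  · have := hF.mono θ h
    simpa using this
  · obtain ⟨x, hx⟩ := hF.surj θ (y - s)
    exact ⟨x, by simp [hx]⟩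
  · simp only [hF.per]; ring

theorem pert_bdd {ω : ℝ} {F : T1 → ℝ → ℝ} (hF : IsQpfLift ω F) {ρ : ℝ}
    (hρ : HasRotNum ω F ρ)
    (hind : ∀ a b c : ℤ, (a : ℝ) * ω + (b : ℝ) * ρ + (c : ℝ) = 0 → a = 0 ∧ b = 0 ∧ c = 0)
    (s : ℝ) (hs : 0 < s) (θ : T1) (x : ℝ) :
    BddBelow (Set.range fun m : ℕ => fiberIter ω (fun θ x => F θ x + s) m θ x - m * ρ) := by
  obtain ⟨δ, hδ, hu⟩ := lift_unif hF s hs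
  obtain ⟨θ1, h1⟩ := exists_lower hF hρ
  obtain ⟨k, -, hk, -⟩ := kron ω ρ hind (θ - θ1) 0 δ hδ 0
  have hd : dist (θ1 + k • (ω : T1)) θ < δ := by
    have e : dist (θ1 + k • (ω : T1)) θ = dist (k • (ω : T1)) (θ - θ1) := by
      rw [dist_eq_norm, dist_eq_norm]; congr 1; abel
    rwa [e]
  set y := fiberIter ω F k θ1 0
  refine ⟨-2 + k * ρ + (x - y) - 1, ?_⟩
  rintro _ ⟨m, rfl⟩
  simp only
  have h2 := fi_cmp (ω := ω) (fun θ => ((pert_lift hF s).mono θ).monotone) hu m _ θ x x hd le_rfl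
  have h3 := fi_ge hF m (θ1 + k • (ω : T1)) y x
  have h4 := h1 (k + m)
  rw [fi_add] at h4
  push_cast at h4
  linarith

/-- The monotone quasi-conjugacy. -/
def hcon (ω : ℝ) (F : T1 → ℝ → ℝ) (ρ : ℝ) (θ : T1) (x : ℝ) : ℝ :=
  ⨅ m : ℕ, (fiberIter ω F m θ x - m * ρ)

/-- Boundedness hypothesis making `hcon` meaningful. -/
def BB (ω : ℝ) (F : T1 → ℝ → ℝ) (ρ : ℝ) : Prop :=
  ∀ θ x, BddBelow (Set.range fun m : ℕ => fiberIter ω F m θ x - m * ρ)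

theorem hcon_le {ω : ℝ} {F : T1 → ℝ → ℝ} {ρ : ℝ} (hB : BB ω F ρ) (θ : T1) (x : ℝ) :
    hcon ω F ρ θ x ≤ x := by
  have := ciInf_le (hB θ x) 0
  simpa [hcon, fiberIter] using this

theorem hcon_cmp {ω : ℝ} {F F' : T1 → ℝ → ℝ} {ρ : ℝ} (hB : BB ω F ρ)
    (hF' : ∀ θ, Monotone (F' θ)) {δ : ℝ}
    (h : ∀ θ θ' x, dist θ θ' < δ → F θ x ≤ F' θ' x) {θ θ' : T1} {x x' : ℝ}
    (hd : dist θ θ' < δ) (hx : x ≤ x') : hcon ω F ρ θ x ≤ hcon ω F' ρ θ' x' := by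
  refine ciInf_mono (hB θ x) fun m => ?_
  have := fi_cmp (ω := ω) hF' h m θ θ' x x' hd hx
  linarith

theorem hcon_mono {ω : ℝ} {F F' : T1 → ℝ → ℝ} {ρ : ℝ} (hB : BB ω F ρ)
    (hF' : ∀ θ, Monotone (F' θ)) (h : ∀ θ x, F θ x ≤ F' θ x) {θ : T1} {x x' : ℝ}
    (hx : x ≤ x') : hcon ω F ρ θ x ≤ hcon ω F' ρ θ x' := by
  refine ciInf_mono (hB θ x) fun m => ?_
  have : ∀ (m : ℕ) (θ : T1) (x x' : ℝ), x ≤ x' →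
      fiberIter ω F m θ x ≤ fiberIter ω F' m θ x' := by
    intro m
    induction m with
    | zero => exact fun _ _ _ h => h
    | succ m ih => exact fun θ x x' hx => ih _ _ _ ((h θ x).trans (hF' θ hx))
  linarith [this m θ x x' hx]

theorem hcon_int {ω : ℝ} {F : T1 → ℝ → ℝ} (hF : IsQpfLift ω F) {ρ : ℝ} (hB : BB ω F ρ) (θ : T1)
    (x : ℝ) (k : ℤ) : hcon ω F ρ θ (x + k) = hcon ω F ρ θ x + k := by
  unfold hcon
  rw [ciInf_add (hB θ x)]
  congr 1
  funext m
  rw [fi_int hF.per]; ring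

theorem hcon_step {ω : ℝ} {F : T1 → ℝ → ℝ} {ρ : ℝ} (hB : BB ω F ρ) (θ : T1)
    (x : ℝ) : hcon ω F ρ θ x + ρ ≤ hcon ω F ρ (θ + (ω : T1)) (F θ x) := by
  refine le_ciInf fun m => ?_
  have := ciInf_le (hB θ x) (m + 1)
  simp only [fiberIter] at this
  unfold hcon
  push_cast at this
  linarith

theorem main_pos (ω : ℝ) (F : T1 → ℝ → ℝ) (hF : IsQpfLift ω F) (ρ : ℝ) (hρ : HasRotNum ω F ρ)
    (ε : ℝ) (hε : 0 < ε) (hlock : HasRotNum ω (fun θ x => F θ x + ε) ρ)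
    (hind : ∀ a b c : ℤ, (a : ℝ) * ω + (b : ℝ) * ρ + (c : ℝ) = 0 → a = 0 ∧ b = 0 ∧ c = 0) :
    False := by
  let P : ℝ → T1 → ℝ → ℝ := fun s θ x => F θ x + s
  have hP : ∀ s, IsQpfLift ω (P s) := pert_lift hF
  have hPm : ∀ s θ, Monotone (P s θ) := fun s θ => ((hP s).mono θ).monotone
  have hB : ∀ s, 0 < s → BB ω (P s) ρ := fun s hs θ x => pert_bdd hF hρ hind s hs θ x
  obtain ⟨θ0, hθ0⟩ := exists_upper (hP ε) hlock
  let X : ℕ → ℝ := fun n => fiberIter ω (P ε) n θ0 0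
  let τ : ℕ → T1 := fun n => θ0 + n • (ω : T1)
  have hX : ∀ n, X (n + 1) = F (τ n) (X n) + ε := by
    intro n
    simp only [X]
    rw [fi_add]
    rfl
  have hτ : ∀ n, τ (n + 1) = τ n + (ω : T1) := by
    intro n
    simp only [τ, succ_nsmul, add_assoc]
  let g : ℝ → ℕ → ℝ := fun a n => hcon ω (P a) ρ (τ n) (X n) - n * ρ
  -- the key lower bound
  have hleft : ∀ a, 0 < a → a ≤ ε / 2 → ∀ n,
      g a n + (n + 1) * ρ ≤ hcon ω (P a) ρ (τ (n + 1)) (X (n + 1) - ε / 2) := by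
    intro a ha ha2 n
    have h1 := hcon_step (hB a ha) (τ n) (X n)
    have h2 : hcon ω (P a) ρ (τ n + (ω : T1)) (P a (τ n) (X n)) ≤
        hcon ω (P a) ρ (τ n + (ω : T1)) (X (n + 1) - ε / 2) := by
      apply hcon_mono (hB a ha) (hPm a) (fun _ _ => le_rfl)
      rw [hX]; simp only [P]; linarith
    rw [hτ]
    simp only [g]
    linarith
  have hgmono : ∀ a, 0 < a → a ≤ ε / 2 → Monotone (g a) := by
    intro a ha ha2
    refine monotone_nat_of_le_succ fun n => ?_
    have h1 := hleft a ha ha2 n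
    have h2 : hcon ω (P a) ρ (τ (n + 1)) (X (n + 1) - ε / 2) ≤
        hcon ω (P a) ρ (τ (n + 1)) (X (n + 1)) :=
      hcon_mono (hB a ha) (hPm a) (fun _ _ => le_rfl) (by linarith)
    have e : g a (n + 1) = hcon ω (P a) ρ (τ (n + 1)) (X (n + 1)) - (n + 1) * ρ := by
      simp only [g]; push_cast; ring
    rw [e]; linarith
  have hgle : ∀ a, 0 < a → ∀ n, g a n ≤ 2 := by
    intro a ha n
    have h1 := hcon_le (hB a ha) (τ n) (X n)
    have h2 := hθ0 n
    have h3 : X n - n * ρ ≤ 2 := h2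
    simp only [g]; linarith
  have hgbdd : ∀ a, 0 < a → BddAbove (Set.range (g a)) := by
    intro a ha
    exact ⟨2, by rintro _ ⟨n, rfl⟩; exact hgle a ha n⟩
  let S : ℝ → ℝ := fun a => ⨆ n, g a n
  have hSle : ∀ a, 0 < a → S a ≤ 2 := fun a ha => ciSup_le (hgle a ha)
  have hgS : ∀ a, 0 < a → ∀ n, g a n ≤ S a := fun a ha n => le_ciSup (hgbdd a ha) n
  obtain ⟨N, hN⟩ := exists_nat_gt (4 / ε)
  have hNpos : (0 : ℝ) < N := lt_trans (by positivity) hN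
  set η : ℝ := 1 / (10 * N) with hη
  have hηpos : 0 < η := by positivity
  have hηN : η * (10 * N) = 1 := by rw [hη]; field_simp
  -- choose `a < b`
  obtain ⟨a, b, ha, hab, hb, hSab⟩ : ∃ a b, 0 < a ∧ a < b ∧ b ≤ ε / 2 ∧ S b < S a + η := by
    by_contra hno
    push Not at hno
    obtain ⟨K, hK⟩ := exists_nat_gt ((2 - S (ε / 4)) / η)
    have hK1 : 2 - S (ε / 4) < K * η := by rwa [div_lt_iff₀ hηpos] at hK
    let α : ℕ → ℝ := fun i => ε / 4 + i * (ε / (4 * (K + 1)))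
    have hstep : 0 < ε / (4 * ((K : ℝ) + 1)) := by positivity
    have hαpos : ∀ i, 0 < α i := fun i => by positivity
    have hαle : ∀ i, i ≤ K → α i ≤ ε / 2 := by
      intro i hi
      have hi' : (i : ℝ) ≤ K + 1 := by
        have : (i : ℝ) ≤ K := by exact_mod_cast hi
        linarith
      have h1 : (i : ℝ) * (ε / (4 * (K + 1))) ≤ (K + 1) * (ε / (4 * (K + 1))) := by gcongr
      have h2 : ((K : ℝ) + 1) * (ε / (4 * (K + 1))) = ε / 4 := by field_simp
      simp only [α]; linarith
    have hgr : ∀ i, i ≤ K → S (ε / 4) + i * η ≤ S (α i) := by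
      intro i
      induction i with
      | zero => intro _; simp [α]
      | succ i ih =>
        intro hi
        have h1 := ih (by omega)
        have h2 := hno (α i) (α (i + 1)) (hαpos i)
          (by simp only [α]; push_cast; linarith) (hαle _ hi)
        push_cast
        linarith
    have h1 := hgr K le_rfl
    have h2 := hSle (α K) (hαpos K)
    linarith
  have hbpos : 0 < b := ha.trans hab
  set c := (a + b) / 2 with hc
  have hcpos : 0 < c := by linarith
  obtain ⟨δ, hδ, hu⟩ := lift_unif hF ((b - a) / 2) (by linarith)
  have hac : ∀ θ θ' x, dist θ θ' < δ → P a θ x ≤ P c θ' x := by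
    intro θ θ' x hd
    have := hu θ θ' x hd
    simp only [P]; linarith
  have hcb : ∀ θ θ' x, dist θ θ' < δ → P c θ x ≤ P b θ' x := by
    intro θ θ' x hd
    have := hu θ θ' x hd
    simp only [P]; linarith
  obtain ⟨M, hM⟩ : ∃ M, S a - η < g a M := exists_lt_of_lt_ciSup (by simp only [S]; linarith)
  let H : ℝ → ℝ := hcon ω (P c) ρ θ0
  have hHm : Monotone H := fun x y h => hcon_mono (hB c hcpos) (hPm c) (fun _ _ => le_rfl) h
  have hHint : ∀ x (k : ℤ), H (x + k) = H x + k := hcon_int (hP c) (hB c hcpos) θ0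
  -- points
  have hY : ∀ i : ℕ, ∃ Y : ℝ, H Y < i / N + η + S b ∧ i / N - 2 * η + S a < H (Y - ε / 2) := by
    intro i
    obtain ⟨n, hn, hd1, hd2⟩ := kron ω ρ hind 0 (((i / N : ℝ)) : T1) (min δ η)
      (lt_min hδ hηpos) (M + 1)
    obtain ⟨n, rfl⟩ : ∃ k, n = k + 1 := ⟨n - 1, by omega⟩
    have hd1' := lt_of_lt_of_le hd1 (min_le_left _ _)
    have hd2' := lt_of_lt_of_le hd2 (min_le_right _ _)
    obtain ⟨p, hp⟩ : ∃ p : ℤ, |((n : ℝ) + 1) * ρ - i / N - p| < η := by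
      have e : (n + 1) • (ρ : T1) - ((i / N : ℝ) : T1) =
          ((((n : ℝ) + 1) * ρ - i / N : ℝ) : T1) := by
        rw [AddCircle.coe_sub, ← AddCircle.coe_nsmul, nsmul_eq_mul]
        push_cast
        rfl
      rw [dist_eq_norm, e, UnitAddCircle.norm_eq] at hd2'
      exact ⟨_, hd2'⟩
    obtain ⟨hp1, hp2⟩ := abs_lt.mp hp
    have hdist : dist (τ (n + 1)) θ0 < δ := by
      have : dist (τ (n + 1)) θ0 = dist ((n + 1) • (ω : T1)) 0 := by
        rw [dist_eq_norm, dist_eq_norm]; congr 1; simp only [τ]; abel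
      rwa [this]
    refine ⟨X (n + 1) + ((-p : ℤ) : ℝ), ?_, ?_⟩
    · rw [hHint]
      have h1 : H (X (n + 1)) ≤ hcon ω (P b) ρ (τ (n + 1)) (X (n + 1)) :=
        hcon_cmp (hB c hcpos) (hPm b) hcb (by rwa [dist_comm]) le_rfl
      have h2 := hgS b hbpos (n + 1)
      simp only [g] at h2
      push_cast at h2 ⊢
      linarith
    · rw [show X (n + 1) + ((-p : ℤ) : ℝ) - ε / 2 = (X (n + 1) - ε / 2) + ((-p : ℤ) : ℝ) by ring,
        hHint]
      have h1 : hcon ω (P a) ρ (τ (n + 1)) (X (n + 1) - ε / 2) ≤ H (X (n + 1) - ε / 2) :=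
        hcon_cmp (hB a ha) (hPm c) hac hdist le_rfl
      have h2 := hleft a ha (by linarith) n
      have h3 := hgmono a ha (by linarith) (show M ≤ n by omega)
      push_cast
      linarith
  choose Y hY1 hY2 using hY
  have hYs : ∀ i, Y i + ε / 2 ≤ Y (i + 1) := by
    intro i
    by_contra hlt
    push Not at hlt
    have h1 : H (Y (i + 1) - ε / 2) ≤ H (Y i) := hHm (by linarith)
    have h2 := hY1 i
    have h3 := hY2 (i + 1)
    push_cast at h3
    rw [add_div] at h3
    have h4 : (1 : ℝ) / N = 10 * η := by rw [hη]; field_simp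
    linarith
  have hYg : ∀ i : ℕ, Y 0 + i * (ε / 2) ≤ Y i := by
    intro i
    induction i with
    | zero => simp
    | succ i ih => push_cast; linarith [hYs i]
  have h1 := hYg N
  have h2 : 2 < N * (ε / 2) := by
    rw [div_lt_iff₀ hε] at hN; linarith
  have h3 : H (Y 0 + ((2 : ℤ) : ℝ)) ≤ H (Y N) := hHm (by push_cast; linarith)
  rw [hHint] at h3
  have h4 := hY1 N
  have h5 := hY2 0
  have h6 : H (Y 0 - ε / 2) ≤ H (Y 0) := hHm (by linarith)
  rw [div_self hNpos.ne'] at h4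
  push_cast at h3 h5
  rw [zero_div] at h5
  have hN1 : (1 : ℝ) ≤ N := by
    have : 0 < N := by exact_mod_cast hNpos
    exact_mod_cast this
  have h7 : η ≤ 1 / 10 := by nlinarith
  linarith

/-- Theorem A, contrapositive form: if the fibered rotation number is
locked on one side (some nontrivial perturbation has the same rotation number), then
`ω`, `ρ` and `1` are rationally dependent. -/
theorem one_sided_locking_rationally_dependent
    (ω : ℝ) (hω : Irrational ω)
    (F : T1 → ℝ → ℝ) (hF : IsQpfLift ω F)
    (ρ : ℝ) (hρ : HasRotNum ω F ρ)
    (hlock : ∃ ε : ℝ, ε ≠ 0 ∧ HasRotNum ω (fun θ x => F θ x + ε) ρ) :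
    ∃ a b c : ℤ, ¬(a = 0 ∧ b = 0 ∧ c = 0) ∧ (a : ℝ) * ω + (b : ℝ) * ρ + (c : ℝ) = 0 := by
  by_contra hno
  have hind : ∀ a b c : ℤ, (a : ℝ) * ω + (b : ℝ) * ρ + (c : ℝ) = 0 → a = 0 ∧ b = 0 ∧ c = 0 := by
    intro a b c h
    by_contra h'
    exact hno ⟨a, b, c, h', h⟩
  obtain ⟨ε, hε0, hε⟩ := hlock
  rcases lt_or_gt_of_ne hε0 with hneg | hpos
  · refine main_pos ω _ (pert_lift hF ε) ρ hε (-ε) (by linarith) ?_ hind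
    have e : (fun θ x => F θ x + ε + -ε) = F := by funext θ x; ring
    rw [e]
    exact hρ
  · exact main_pos ω F hF ρ hρ ε hpos hε hind
end
end
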